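/- arXiv:1308.1286 — 2 statements merged into one kernel-verified Lean document; each statement's English description precedes it below -/
import Mathlib

section
/- Let q be a prime power and F_{q^2} the field with q² elements; for P ∈ F_{q^2}[x], let P̄ denote the polynomial obtained by raising each coefficient of P to the q-th power. Let U_n(q) denote the set of monic polynomials P(x) ∈ F_{q^2}[x] of degree n such that P̄(x) = (−x)^n P(1/x), i.e., for every 0 ≤ i ≤ n the q-th power of the coefficient of x^i in P equals (−1)^n times the coefficient of x^{n−i} in P. For every k > 0 there exists N such that for every integer n ≥ 2 and every prime power q, the number of P ∈ U_n(q) that split into more than N·log n monic irreducible factors over F_{q^2}[x] (counted with multiplicity) is at most n^{−k} · |U_n(q)|. -/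
/-!
The monic polynomials equal to their conjugate reciprocal `P* = (φ a₀)⁻¹ xⁿ (φP)(1/x)` form a
monoid, freely generated by blocks: an irreducible `f` with `f = f*`, or a product `f f*`. Hence
`∑ u ^ deg P` over this monoid is an Euler product over blocks `B` with factors
`(1 - u ^ deg B)⁻¹`. Giving every block the extra weight `3/2` at most squares each of these factors
when `0 ≤ u ≤ 1/2`, and a block has at most two irreducible factors, so
`∑ (3/2) ^ (card (factors P) / 2) * u ^ deg P ≤ (∑ u ^ deg P) ^ 2`. The right side is `O(n²)` at
`u = (1 - 1/(2n))/q`, and Rankin's trick bounds the number of elements of degree `n` with more than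
`N log n` factors by a power of `n`, as negative as we please, times `qⁿ`.

The polynomials of the theorem lie in one of the classes `φP = ε xⁿ P(1/x)` that make up the monoid
in degree `n`. Multiplying the roots by any of the `q + 1` elements of norm one keeps the number of
factors and lands in the monoid at most `n`-to-one, which recovers the missing factor `q`.
-/

open Polynomial UniqueFactorizationMonoid

section UniqueFactorization

variable {α : Type*} [CommMonoidWithZero α] [UniqueFactorizationMonoid α]

theorem card_factors_mul {a b : α} (ha : a ≠ 0) (hb : b ≠ 0) :
    (factors (a * b)).card = (factors a).card + (factors b).card := by
  rw [Multiset.card_eq_card_of_rel (factors_mul ha hb), Multiset.card_add]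

theorem card_factors_of_isUnit {a : α} (ha : IsUnit a) : (factors a).card = 0 := by
  rw [factors_of_isUnit ha, Multiset.card_zero]

theorem card_factors_pos {a : α} (h0 : a ≠ 0) (ha : ¬IsUnit a) : 0 < (factors a).card :=
  Multiset.card_pos.2 ((factors_pos h0).2 ha).ne'

theorem card_factors_multiset_prod_le {c : ℕ} {s : Multiset α} (h0 : s.prod ≠ 0)
    (hs : ∀ a ∈ s, (factors a).card ≤ c) : (factors s.prod).card ≤ c * s.card := by
  induction s using Multiset.induction_on with
  | empty => simp
  | cons a s ih =>
    rw [Multiset.prod_cons] at h0 ⊢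
    rw [card_factors_mul (left_ne_zero_of_mul h0) (right_ne_zero_of_mul h0), Multiset.card_cons,
      mul_add_one, add_comm]
    exact add_le_add (ih (right_ne_zero_of_mul h0) fun b hb => hs b (Multiset.mem_cons_of_mem hb))
      (hs a (Multiset.mem_cons_self a s))

end UniqueFactorization

theorem prod_pow_injective_of_pairwise_isCoprime {ι R : Type*} [Fintype ι] [CommRing R]
    [IsDomain R] {B : ι → R} (h0 : ∀ i, B i ≠ 0) (hu : ∀ i, ¬IsUnit (B i))
    (hB : Pairwise (Function.onFun IsCoprime B)) :
    Function.Injective fun m : ι → ℕ => ∏ i, B i ^ m i := by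
  classical
  suffices key : ∀ m m' : ι → ℕ, ∏ i, B i ^ m i = ∏ i, B i ^ m' i → m ≤ m' from
    fun m m' h => le_antisymm (key m m' h) (key m' m h.symm)
  intro m m' h i
  have hdvd : B i ^ m i ∣ B i ^ m' i * ∏ j ∈ Finset.univ.erase i, B j ^ m' j := by
    rw [Finset.mul_prod_erase Finset.univ (fun j => B j ^ m' j) (Finset.mem_univ i), ← h]
    exact Finset.dvd_prod_of_mem _ (Finset.mem_univ i)
  have hco : IsCoprime (B i ^ m i) (∏ j ∈ Finset.univ.erase i, B j ^ m' j) :=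
    IsCoprime.prod_right fun j hj => (hB (Finset.ne_of_mem_erase hj).symm).pow
  exact (pow_dvd_pow_iff (h0 i) (hu i)).1 (hco.dvd_of_dvd_mul_right hdvd)

section ConjReciprocal

variable {K : Type*} [Field K]

theorem coeff_zero_ne_zero_of_dvd {P Q : K[X]} (h : P ∣ Q) (h0 : Q.coeff 0 ≠ 0) :
    P.coeff 0 ≠ 0 :=
  fun hP => h0 (X_dvd_iff.1 ((X_dvd_iff.2 hP).trans h))

variable (φ : K →+* K)

/-- The conjugate reciprocal `P ↦ (φ a₀)⁻¹ xⁿ (φP)(1/x)` of a polynomial `P = aₙ xⁿ + ⋯ + a₀`. It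
is the zero polynomial when `a₀ = 0`. -/
noncomputable def conjReciprocal : K[X] →* K[X] where
  toFun P := C (φ (P.coeff 0))⁻¹ * P.reverse.map φ
  map_one' := by rw [← C_1, reverse_C]; simp
  map_mul' P Q := by
    simp only [mul_coeff_zero, map_mul, mul_inv, reverse_mul_of_domain, Polynomial.map_mul]
    ring

theorem coeff_conjReciprocal {P : K[X]} {i : ℕ} (hi : i ≤ P.natDegree) :
    (conjReciprocal φ P).coeff i = (φ (P.coeff 0))⁻¹ * φ (P.coeff (P.natDegree - i)) := by
  simp only [conjReciprocal, MonoidHom.coe_mk, OneHom.coe_mk, coeff_C_mul, coeff_map,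
    coeff_reverse, revAt_le hi]

theorem natDegree_conjReciprocal {P : K[X]} (h0 : P.coeff 0 ≠ 0) :
    (conjReciprocal φ P).natDegree = P.natDegree := by
  simp only [conjReciprocal, MonoidHom.coe_mk, OneHom.coe_mk]
  rw [natDegree_C_mul (inv_ne_zero ((map_ne_zero φ).2 h0)), natDegree_map, reverse_natDegree,
    natTrailingDegree_eq_zero_of_constantCoeff_ne_zero h0, Nat.sub_zero]

theorem monic_conjReciprocal {P : K[X]} (h0 : P.coeff 0 ≠ 0) : (conjReciprocal φ P).Monic := by
  rw [Monic, leadingCoeff, natDegree_conjReciprocal φ h0, coeff_conjReciprocal φ le_rfl,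
    Nat.sub_self, inv_mul_cancel₀ ((map_ne_zero φ).2 h0)]

theorem coeff_zero_conjReciprocal_ne_zero {P : K[X]} (h0 : P.coeff 0 ≠ 0) :
    (conjReciprocal φ P).coeff 0 ≠ 0 := by
  rw [coeff_conjReciprocal φ (Nat.zero_le _), Nat.sub_zero]
  refine mul_ne_zero (inv_ne_zero ((map_ne_zero φ).2 h0)) ((map_ne_zero φ).2 ?_)
  exact leadingCoeff_ne_zero.2 (ne_of_apply_ne (coeff · 0) h0)

theorem isUnit_conjReciprocal_iff {P : K[X]} (h0 : P.coeff 0 ≠ 0) :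
    IsUnit (conjReciprocal φ P) ↔ IsUnit P := by
  have hP : P ≠ 0 := ne_of_apply_ne (coeff · 0) h0
  rw [isUnit_iff_degree_eq_zero, isUnit_iff_degree_eq_zero, degree_eq_natDegree hP,
    degree_eq_natDegree (monic_conjReciprocal φ h0).ne_zero, natDegree_conjReciprocal φ h0]

variable {φ}

theorem conjReciprocal_conjReciprocal (hφ : Function.Involutive φ) {P : K[X]} (hP : P.Monic)
    (h0 : P.coeff 0 ≠ 0) : conjReciprocal φ (conjReciprocal φ P) = P := by
  have hd := natDegree_conjReciprocal φ h0
  have hd' := natDegree_conjReciprocal φ (coeff_zero_conjReciprocal_ne_zero φ h0)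
  ext i
  rcases le_or_gt i P.natDegree with hi | hi
  · rw [coeff_conjReciprocal φ (hd.symm ▸ hi), hd, coeff_conjReciprocal φ (Nat.zero_le _),
      coeff_conjReciprocal φ (Nat.sub_le _ _), Nat.sub_sub_self hi, Nat.sub_zero, coeff_natDegree,
      hP.leadingCoeff]
    simp only [map_mul, map_inv₀, hφ _, map_one, mul_one, inv_inv]
    rw [mul_inv_cancel_left₀ h0]
  · rw [coeff_eq_zero_of_natDegree_lt (by omega), coeff_eq_zero_of_natDegree_lt hi]

theorem irreducible_conjReciprocal (hφ : Function.Involutive φ) {P : K[X]} (hP : P.Monic)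
    (h0 : P.coeff 0 ≠ 0) (hi : Irreducible P) : Irreducible (conjReciprocal φ P) := by
  refine ⟨mt (isUnit_conjReciprocal_iff φ h0).1 hi.not_isUnit, fun a b hab => ?_⟩
  have isUnit_of_dvd {c : K[X]} (hc : c ∣ conjReciprocal φ P) :
      IsUnit (conjReciprocal φ c) → IsUnit c :=
    (isUnit_conjReciprocal_iff φ
      (coeff_zero_ne_zero_of_dvd hc (coeff_zero_conjReciprocal_ne_zero φ h0))).1
  have hP_eq : P = conjReciprocal φ a * conjReciprocal φ b := by
    rw [← map_mul, ← hab, conjReciprocal_conjReciprocal hφ hP h0]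
  exact (hi.isUnit_or_isUnit hP_eq).imp (isUnit_of_dvd (Dvd.intro _ hab.symm))
    (isUnit_of_dvd (Dvd.intro_left _ hab.symm))

variable (φ)

/-- The monoid of monic polynomials that equal their conjugate reciprocal. Their constant term is
nonzero because `conjReciprocal φ P = 0` if `P.coeff 0 = 0`. -/
noncomputable def selfConjReciprocal : Submonoid K[X] where
  carrier := {P | P.Monic ∧ conjReciprocal φ P = P}
  one_mem' := ⟨monic_one, map_one _⟩
  mul_mem' hP hQ := ⟨hP.1.mul hQ.1, by rw [map_mul, hP.2, hQ.2]⟩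

variable {φ} {P Q : K[X]}

theorem coeff_zero_ne_zero_of_mem_selfConjReciprocal (hP : P ∈ selfConjReciprocal φ) :
    P.coeff 0 ≠ 0 := by
  intro h0
  refine hP.1.ne_zero (hP.2.symm.trans ?_)
  simp [conjReciprocal, h0]

theorem mem_selfConjReciprocal_of_mul_mem (hP : P ∈ selfConjReciprocal φ)
    (hPQ : P * Q ∈ selfConjReciprocal φ) : Q ∈ selfConjReciprocal φ := by
  refine ⟨hP.1.of_mul_monic_left hPQ.1, mul_left_cancel₀ hP.1.ne_zero ?_⟩
  rw [← hPQ.2, map_mul, hP.2]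

end ConjReciprocal

section ConjBlock

variable {K : Type*} [Field K] (φ : K →+* K)

open scoped Classical in
/-- The smallest self-conjugate-reciprocal multiple of a monic irreducible polynomial `f`, for an
involution `φ`. -/
noncomputable def conjBlock (f : K[X]) : K[X] :=
  if conjReciprocal φ f = f then f else f * conjReciprocal φ f

/-- The atoms of the monoid `selfConjReciprocal φ`, for an involution `φ`. -/
def IsConjBlock (B : K[X]) : Prop :=
  ∃ f : K[X], f.Monic ∧ Irreducible f ∧ f.coeff 0 ≠ 0 ∧ conjBlock φ f = B

variable {φ} {f g P : K[X]}

theorem dvd_conjBlock (f : K[X]) : f ∣ conjBlock φ f := by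
  unfold conjBlock
  split_ifs
  · exact dvd_rfl
  · exact dvd_mul_right _ _

theorem conjBlock_mem_selfConjReciprocal (hφ : Function.Involutive φ) (hf : f.Monic)
    (h0 : f.coeff 0 ≠ 0) : conjBlock φ f ∈ selfConjReciprocal φ := by
  unfold conjBlock
  split_ifs with h
  · exact ⟨hf, h⟩
  · refine ⟨hf.mul (monic_conjReciprocal φ h0), ?_⟩
    rw [map_mul, conjReciprocal_conjReciprocal hφ hf h0, mul_comm]

theorem conjBlock_dvd_of_dvd (hφ : Function.Involutive φ) (hf : f.Monic) (hfi : Irreducible f)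
    (hP : P ∈ selfConjReciprocal φ) (h : f ∣ P) : conjBlock φ f ∣ P := by
  have h0 := coeff_zero_ne_zero_of_dvd h (coeff_zero_ne_zero_of_mem_selfConjReciprocal hP)
  unfold conjBlock
  split_ifs with hs
  · exact h
  · have hco : IsCoprime f (conjReciprocal φ f) := by
      refine hfi.coprime_iff_not_dvd.2 fun hd => hs ?_
      exact (eq_of_monic_of_associated hf (monic_conjReciprocal φ h0)
        (hfi.associated_of_dvd (irreducible_conjReciprocal hφ hf h0 hfi) hd)).symm
    have hdvd := map_dvd (conjReciprocal φ) h
    rw [hP.2] at hdvd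
    exact hco.mul_dvd h hdvd

theorem conjBlock_conjReciprocal (hφ : Function.Involutive φ) (hf : f.Monic)
    (h0 : f.coeff 0 ≠ 0) : conjBlock φ (conjReciprocal φ f) = conjBlock φ f := by
  unfold conjBlock
  rw [conjReciprocal_conjReciprocal hφ hf h0]
  by_cases h : conjReciprocal φ f = f
  · rw [if_pos h, if_pos h.symm, h]
  · rw [if_neg h, if_neg (Ne.symm h), mul_comm]

theorem conjBlock_eq_of_dvd_conjBlock (hφ : Function.Involutive φ) (hf : f.Monic)
    (hfi : Irreducible f) (hg : g.Monic) (hgi : Irreducible g) (h0 : g.coeff 0 ≠ 0)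
    (h : f ∣ conjBlock φ g) : conjBlock φ f = conjBlock φ g := by
  have eq_of_dvd {p : K[X]} (hp : p.Monic) (hpi : Irreducible p) (hfp : f ∣ p) : f = p :=
    eq_of_monic_of_associated hf hp (hfi.associated_of_dvd hpi hfp)
  have h_or : f ∣ g ∨ f ∣ conjReciprocal φ g := by
    unfold conjBlock at h
    split_ifs at h
    · exact .inl h
    · exact hfi.prime.dvd_or_dvd h
  rcases h_or with h | h
  · rw [eq_of_dvd hg hgi h]
  · rw [eq_of_dvd (monic_conjReciprocal φ h0) (irreducible_conjReciprocal hφ hg h0 hgi) h,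
      conjBlock_conjReciprocal hφ hg h0]

namespace IsConjBlock

variable {B B' : K[X]}

theorem mem_selfConjReciprocal (hφ : Function.Involutive φ) (hB : IsConjBlock φ B) :
    B ∈ selfConjReciprocal φ := by
  obtain ⟨f, hf, -, h0, rfl⟩ := hB
  exact conjBlock_mem_selfConjReciprocal hφ hf h0

theorem monic (hφ : Function.Involutive φ) (hB : IsConjBlock φ B) : B.Monic :=
  (hB.mem_selfConjReciprocal hφ).1

theorem not_isUnit (hB : IsConjBlock φ B) : ¬IsUnit B := by
  obtain ⟨f, -, hfi, -, rfl⟩ := hB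
  exact fun hu => hfi.not_isUnit (isUnit_of_dvd_unit (dvd_conjBlock f) hu)

theorem natDegree_ne_zero (hφ : Function.Involutive φ) (hB : IsConjBlock φ B) :
    B.natDegree ≠ 0 := fun h =>
  hB.not_isUnit ((hB.monic hφ).natDegree_eq_zero.1 h ▸ isUnit_one)

theorem card_factors_le_two (hφ : Function.Involutive φ) (hB : IsConjBlock φ B) :
    (factors B).card ≤ 2 := by
  obtain ⟨f, hf, hfi, h0, rfl⟩ := hB
  have hi := irreducible_conjReciprocal hφ hf h0 hfi
  unfold conjBlock
  split_ifs
  · rw [card_factors_of_irreducible hfi]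
    exact one_le_two
  · rw [card_factors_mul hfi.ne_zero hi.ne_zero, card_factors_of_irreducible hfi,
      card_factors_of_irreducible hi]

theorem isCoprime (hφ : Function.Involutive φ) (hB : IsConjBlock φ B) (hB' : IsConjBlock φ B')
    (hne : B ≠ B') : IsCoprime B B' := by
  classical
  by_contra hco
  have hu : ¬IsUnit (EuclideanDomain.gcd B B') := mt EuclideanDomain.gcd_isUnit_iff.1 hco
  obtain ⟨p, hp, hpi, hpd⟩ := exists_monic_irreducible_factor _ hu
  have hpB := hpd.trans (EuclideanDomain.gcd_dvd_left B B')
  have hpB' := hpd.trans (EuclideanDomain.gcd_dvd_right B B')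
  obtain ⟨f, hf, hfi, hf0, rfl⟩ := hB
  obtain ⟨g, hg, hgi, hg0, rfl⟩ := hB'
  exact hne ((conjBlock_eq_of_dvd_conjBlock hφ hp hpi hf hfi hf0 hpB).symm.trans
    (conjBlock_eq_of_dvd_conjBlock hφ hp hpi hg hgi hg0 hpB'))

end IsConjBlock

theorem exists_multiset_isConjBlock_prod_eq (hφ : Function.Involutive φ)
    (hP : P ∈ selfConjReciprocal φ) :
    ∃ s : Multiset K[X], (∀ B ∈ s, IsConjBlock φ B) ∧ s.prod = P := by
  induction hn : P.natDegree using Nat.strong_induction_on generalizing P with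
  | _ n ih =>
  by_cases hu : IsUnit P
  · exact ⟨0, by simp, by rw [Multiset.prod_zero, hP.1.isUnit_iff.1 hu]⟩
  · obtain ⟨f, hf, hfi, hfP⟩ := exists_monic_irreducible_factor P hu
    have hB : IsConjBlock φ (conjBlock φ f) := ⟨f, hf, hfi,
      coeff_zero_ne_zero_of_dvd hfP (coeff_zero_ne_zero_of_mem_selfConjReciprocal hP), rfl⟩
    obtain ⟨Q, rfl⟩ := conjBlock_dvd_of_dvd hφ hf hfi hP hfP
    have hQ := mem_selfConjReciprocal_of_mul_mem (hB.mem_selfConjReciprocal hφ) hP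
    have hdeg := hB.natDegree_ne_zero hφ
    rw [(hB.monic hφ).natDegree_mul hQ.1] at hn
    obtain ⟨s, hs, rfl⟩ := ih Q.natDegree (by omega) hQ rfl
    exact ⟨conjBlock φ f ::ₘ s, Multiset.forall_mem_cons.2 ⟨hB, hs⟩, Multiset.prod_cons _ _⟩

end ConjBlock

theorem card_fixedPoints_sq_of_semilinear {K V : Type*} [Field K] [AddCommGroup V] [Module K V]
    {φ : K →+* K} (hφ : Function.Involutive φ) {ω : K} (hω : φ ω ≠ ω) {σ : V →ₛₗ[φ] V}
    (hσ : Function.Involutive σ) : Nat.card (Function.fixedPoints σ) ^ 2 = Nat.card V := by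
  have hsub : ω - φ ω ≠ 0 := sub_ne_zero.2 hω.symm
  let f (p : Function.fixedPoints σ × Function.fixedPoints σ) : V := (p.1 : V) + ω • (p.2 : V)
  have hf_apply (v w : Function.fixedPoints σ) :
      f (v, w) - σ (f (v, w)) = (ω - φ ω) • (w : V) := by
    simp only [f, map_add, map_smulₛₗ, v.2.eq, w.2.eq, sub_smul]
    abel
  have hf : Function.Bijective f := by
    constructor
    · rintro ⟨v, w⟩ ⟨v', w'⟩ h
      have hw : w = w' := Subtype.ext <| smul_right_injective V hsub <|
        (hf_apply v w).symm.trans (h ▸ hf_apply v' w')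
      subst hw
      exact Prod.ext (Subtype.ext (add_right_cancel h)) rfl
    · intro h
      have hw : σ ((ω - φ ω)⁻¹ • (h - σ h)) = (ω - φ ω)⁻¹ • (h - σ h) := by
        rw [map_smulₛₗ, map_sub, hσ h, map_inv₀, map_sub, hφ, ← neg_sub ω, inv_neg, neg_smul,
          ← smul_neg, neg_sub]
      set w := (ω - φ ω)⁻¹ • (h - σ h)
      have hv : σ (h - ω • w) = h - ω • w := by
        have hsmul : (ω - φ ω) • w = h - σ h := smul_inv_smul₀ hsub _
        rw [map_sub, map_smulₛₗ, hw, sub_eq_sub_iff_sub_eq_sub, ← neg_sub h, ← hsmul, ← neg_smul,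
          neg_sub, sub_smul]
      exact ⟨(⟨h - ω • w, hv⟩, ⟨w, hw⟩), sub_add_cancel _ _⟩
  rw [← Nat.card_eq_of_bijective f hf, Nat.card_prod, sq]

section TwistedReciprocal

variable {K : Type*} [Field K] (φ : K →+* K) (ε : K)

/-- The monic polynomials `P` of degree `n` such that `φP = ε xⁿ P(1/x)`. The theorem concerns the
`q`-Frobenius `φ` and the sign `ε = (-1)ⁿ`. -/
def twistedReciprocal (n : ℕ) : Set K[X] :=
  {P | P.Monic ∧ P.natDegree = n ∧ ∀ i ≤ n, φ (P.coeff i) = ε * P.coeff (n - i)}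

/-- The semilinear map on coefficient vectors whose fixed points are the vectors of middle
coefficients of the polynomials in `twistedReciprocal φ ε (n + 1)`. -/
def twistedReverse (n : ℕ) : (Fin n → K) →ₛₗ[φ] (Fin n → K) where
  toFun c j := φ (ε * c j.rev)
  map_add' c d := by
    ext j
    simp only [Pi.add_apply, mul_add, map_add]
  map_smul' a c := by
    ext j
    simp only [Pi.smul_apply, smul_eq_mul, mul_left_comm ε, map_mul]

variable {φ ε} {n : ℕ} {P : K[X]}

theorem twistedReverse_involutive (hφ : Function.Involutive φ) (hε : φ ε * ε = 1) :
    Function.Involutive (twistedReverse φ ε n) := by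
  intro c
  ext j
  simp only [twistedReverse, LinearMap.coe_mk, AddHom.coe_mk, Fin.rev_rev, map_mul, hφ _]
  rw [← mul_assoc, hε, one_mul]

theorem mem_fixedPoints_twistedReverse (hφ : Function.Involutive φ) {c : Fin n → K} :
    c ∈ Function.fixedPoints (twistedReverse φ ε n) ↔ ∀ j, φ (c j) = ε * c j.rev := by
  simp only [Function.mem_fixedPoints, Function.IsFixedPt, funext_iff]
  exact forall_congr' fun j => hφ.eq_iff.trans eq_comm

theorem mul_coeff_zero_of_mem_twistedReciprocal (hP : P ∈ twistedReciprocal φ ε n) :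
    ε * P.coeff 0 = 1 := by
  obtain ⟨hm, rfl, hc⟩ := hP
  rw [← Nat.sub_self P.natDegree, ← hc _ le_rfl, coeff_natDegree, hm.leadingCoeff, map_one]

theorem map_coeff_zero_of_mem_twistedReciprocal (hP : P ∈ twistedReciprocal φ ε n) :
    φ (P.coeff 0) = ε := by
  obtain ⟨hm, rfl, hc⟩ := hP
  rw [hc 0 (Nat.zero_le _), Nat.sub_zero, coeff_natDegree, hm.leadingCoeff, mul_one]

theorem map_mul_self_of_mem_twistedReciprocal (hφ : Function.Involutive φ)
    (hP : P ∈ twistedReciprocal φ ε n) : φ ε * ε = 1 := by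
  rw [← map_coeff_zero_of_mem_twistedReciprocal hP, hφ, mul_comm,
    map_coeff_zero_of_mem_twistedReciprocal hP, mul_coeff_zero_of_mem_twistedReciprocal hP]

theorem mem_selfConjReciprocal_of_mem_twistedReciprocal (hP : P ∈ twistedReciprocal φ ε n) :
    P ∈ selfConjReciprocal φ := by
  have hε := mul_coeff_zero_of_mem_twistedReciprocal hP
  have hd := natDegree_conjReciprocal φ (right_ne_zero_of_mul_eq_one hε)
  refine ⟨hP.1, ?_⟩
  ext i
  rcases le_or_gt i P.natDegree with hi | hi
  · rw [coeff_conjReciprocal φ hi, hP.2.1, hP.2.2 _ (Nat.sub_le _ _),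
      Nat.sub_sub_self (hP.2.1 ▸ hi), map_coeff_zero_of_mem_twistedReciprocal hP,
      inv_mul_cancel_left₀ (left_ne_zero_of_mul_eq_one hε)]
  · rw [coeff_eq_zero_of_natDegree_lt (hd.symm ▸ hi), coeff_eq_zero_of_natDegree_lt hi]

theorem mem_twistedReciprocal_of_mem_selfConjReciprocal (hP : P ∈ selfConjReciprocal φ) :
    P ∈ twistedReciprocal φ (φ (P.coeff 0)) P.natDegree := by
  refine ⟨hP.1, rfl, fun i hi => ?_⟩
  have h := coeff_conjReciprocal φ (Nat.sub_le P.natDegree i)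
  rw [hP.2, Nat.sub_sub_self hi] at h
  rw [h, mul_inv_cancel_left₀ ((map_ne_zero φ).2 (coeff_zero_ne_zero_of_mem_selfConjReciprocal hP))]

theorem scaleRoots_mem_twistedReciprocal {μ : K} (hμ : φ μ * μ = 1)
    (hP : P ∈ twistedReciprocal φ ε n) :
    P.scaleRoots μ ∈ twistedReciprocal φ (ε * φ μ ^ n) n := by
  refine ⟨(monic_scaleRoots_iff μ).2 hP.1, by rw [natDegree_scaleRoots, hP.2.1], fun i hi => ?_⟩
  have hpow : φ μ ^ n * μ ^ i = φ μ ^ (n - i) := by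
    rw [← Nat.sub_add_cancel hi, pow_add, mul_assoc, ← mul_pow, hμ, one_pow, mul_one,
      Nat.add_sub_cancel]
  rw [coeff_scaleRoots, coeff_scaleRoots, hP.2.1, map_mul, map_pow, hP.2.2 i hi,
    Nat.sub_sub_self hi, ← hpow]
  ring

theorem injOn_coeff_twistedReciprocal (n : ℕ) :
    Set.InjOn (fun (P : K[X]) (j : Fin n) => P.coeff (j + 1)) (twistedReciprocal φ ε (n + 1)) := by
  intro P hP Q hQ h
  have hε := mul_coeff_zero_of_mem_twistedReciprocal hP
  ext i
  rcases i with _ | i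
  · exact mul_left_cancel₀ (left_ne_zero_of_mul_eq_one hε)
      (hε.trans (mul_coeff_zero_of_mem_twistedReciprocal hQ).symm)
  rcases lt_trichotomy i n with hi | rfl | hi
  · exact congrFun h ⟨i, hi⟩
  · rw [← hP.2.1, hP.1.coeff_natDegree, hP.2.1, ← hQ.2.1, hQ.1.coeff_natDegree]
  · rw [coeff_eq_zero_of_natDegree_lt (by rw [hP.2.1]; omega),
      coeff_eq_zero_of_natDegree_lt (by rw [hQ.2.1]; omega)]

theorem exists_mem_twistedReciprocal_coeff_eq (hφ : Function.Involutive φ) (hε : φ ε * ε = 1)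
    {c : Fin n → K} (hc : ∀ j, φ (c j) = ε * c j.rev) :
    ∃ P ∈ twistedReciprocal φ ε (n + 1), ∀ j : Fin n, P.coeff (j + 1) = c j := by
  classical
  set P : K[X] := X ^ (n + 1) + (X * ofFn n c + C (φ ε)) with hP
  have h0 : P.coeff 0 = φ ε := by simp [hP]
  have hmid (i : ℕ) (hi : i < n) : P.coeff (i + 1) = c ⟨i, hi⟩ := by
    simp [hP, hi, hi.ne, coeff_X_pow]
  have htop : P.coeff (n + 1) = 1 := by simp [hP]
  have hdeg : P.natDegree = n + 1 := by
    refine natDegree_eq_of_le_of_coeff_ne_zero (natDegree_le_iff_coeff_eq_zero.2 ?_)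
      (htop ▸ one_ne_zero)
    rintro (_ | i) hi
    · omega
    · have hi' : n < i := by omega
      simp [hP, hi'.ne', hi'.le, coeff_X_pow]
  refine ⟨P, ⟨?_, hdeg, fun i hi => ?_⟩, fun j => hmid j j.2⟩
  · rw [Monic, leadingCoeff, hdeg, htop]
  · rcases i with _ | i
    · rw [h0, hφ, Nat.sub_zero, htop, mul_one]
    rcases (Nat.le_of_succ_le_succ hi).lt_or_eq with hi | rfl
    · rw [hmid i hi, hc, show n + 1 - (i + 1) = (n - (i + 1)) + 1 by omega,
        hmid _ (by omega)]
      rfl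
    · rw [htop, Nat.sub_self, h0, map_one, mul_comm, hε]

theorem bijOn_coeff_twistedReciprocal (hφ : Function.Involutive φ) (hε : φ ε * ε = 1) (n : ℕ) :
    Set.BijOn (fun (P : K[X]) (j : Fin n) => P.coeff (j + 1)) (twistedReciprocal φ ε (n + 1))
      (Function.fixedPoints (twistedReverse φ ε n)) := by
  refine ⟨fun P hP => (mem_fixedPoints_twistedReverse hφ).2 fun j => ?_,
    injOn_coeff_twistedReciprocal n, fun c hc => ?_⟩
  · dsimp only
    rw [hP.2.2 _ (by omega), Fin.val_rev, Nat.sub_add_comm (by omega)]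
  · obtain ⟨P, hP, hPc⟩ := exists_mem_twistedReciprocal_coeff_eq hφ hε
      ((mem_fixedPoints_twistedReverse hφ).1 hc)
    exact ⟨P, hP, funext hPc⟩

theorem ncard_twistedReciprocal_sq (hφ : Function.Involutive φ) {ω : K} (hω : φ ω ≠ ω)
    (hε : φ ε * ε = 1) (n : ℕ) :
    (twistedReciprocal φ ε (n + 1)).ncard ^ 2 = Nat.card K ^ n := by
  rw [(bijOn_coeff_twistedReciprocal hφ hε n).ncard_eq, ← Nat.card_coe_set_eq,
    card_fixedPoints_sq_of_semilinear hφ hω (twistedReverse_involutive hφ hε), Nat.card_fun,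
    Nat.card_fin]

end TwistedReciprocal

section ScaleRoots

variable {K : Type*} [Field K]

theorem card_factors_le_card_factors_scaleRoots {P : K[X]} (hP : P ≠ 0) (μ : K) :
    (factors P).card ≤ (factors (P.scaleRoots μ)).card := by
  induction P using WfDvdMonoid.induction_on_irreducible with
  | zero => exact absurd rfl hP
  | unit u hu =>
    rw [card_factors_of_isUnit hu]
    exact Nat.zero_le _
  | mul a p ha hp ih =>
    have hpu : ¬IsUnit (p.scaleRoots μ) := fun hu =>
      hp.natDegree_pos.ne' (natDegree_scaleRoots p μ ▸ natDegree_eq_zero_of_isUnit hu)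
    have hp0 := scaleRoots_ne_zero hp.ne_zero μ
    rw [mul_scaleRoots_of_noZeroDivisors, card_factors_mul hp.ne_zero ha,
      card_factors_mul hp0 (scaleRoots_ne_zero ha μ), card_factors_of_irreducible hp]
    exact add_le_add (card_factors_pos hp0 hpu) (ih ha)

theorem scaleRoots_left_injective {μ : K} (hμ : μ ≠ 0) :
    Function.Injective fun P : K[X] => P.scaleRoots μ :=
  Function.LeftInverse.injective (g := fun P => P.scaleRoots μ⁻¹) fun P => by
    dsimp only
    rw [← scaleRoots_mul, mul_inv_cancel₀ hμ, scaleRoots_one]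

open scoped Classical in
theorem card_mul_card_le_mul_card_image₂_scaleRoots {E : Finset K} {A : Finset K[X]} {n : ℕ}
    {a : K} (hn : 0 < n) (ha : a ≠ 0) (hE : 0 ∉ E)
    (hA : ∀ P ∈ A, P.natDegree = n ∧ P.coeff 0 = a) :
    A.card * E.card ≤ n * (Finset.image₂ scaleRoots A E).card := by
  -- The image of `(P, μ)` determines `μ ^ n` through its constant coefficient.
  rw [← Finset.card_product, ← Finset.image_uncurry_product]
  refine Finset.card_le_mul_card_image _ n fun Q _ => ?_
  refine (Finset.card_le_card_of_injOn (t := (nthRoots n (Q.coeff 0 / a)).toFinset)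
    Prod.snd ?_ ?_).trans ((Multiset.toFinset_card_le _).trans (card_nthRoots _ _))
  · rintro ⟨P, μ⟩ h
    simp only [Finset.coe_filter, Finset.mem_product, Set.mem_ofPred_eq] at h
    obtain ⟨⟨hP, -⟩, rfl⟩ := h
    rw [Finset.mem_coe, Multiset.mem_toFinset, mem_nthRoots hn, Function.uncurry_apply_pair,
      coeff_scaleRoots, (hA P hP).1, (hA P hP).2, Nat.sub_zero, mul_div_cancel_left₀ _ ha]
  · rintro ⟨P, μ⟩ h ⟨P', μ'⟩ h' (rfl : μ = μ')
    simp only [Finset.coe_filter, Finset.mem_product, Set.mem_ofPred_eq] at h h'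
    exact Prod.ext
      (scaleRoots_left_injective (ne_of_mem_of_not_mem h.1.2 hE) (h.2.trans h'.2.symm)) rfl

end ScaleRoots

section FiniteField

variable {K : Type*} [Field K] {φ : K →+* K} {n q : ℕ}

theorem mem_nthRootsFinset_iff_map_mul_self (hφ : ∀ x, φ x = x ^ q) {x : K} :
    x ∈ nthRootsFinset (q + 1) (1 : K) ↔ φ x * x = 1 := by
  rw [mem_nthRootsFinset q.succ_pos, hφ, pow_succ]

variable [Fintype K]

theorem one_lt_of_card_eq_sq (hK : Fintype.card K = q ^ 2) : 1 < q :=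
  (Nat.one_lt_pow_iff two_ne_zero).1 (hK ▸ Fintype.one_lt_card)

theorem exists_ringHom_eq_pow_of_card_eq_sq (hK : Fintype.card K = q ^ 2) :
    ∃ φ : K →+* K, ∀ x, φ x = x ^ q := by
  have hq : IsPrimePow q := (isPrimePow_pow_iff two_ne_zero).1 (hK ▸ FiniteField.isPrimePow_card K)
  obtain ⟨p, m, hp, -, rfl⟩ := hq
  have : Fact p.Prime := ⟨hp.nat_prime⟩
  rw [← pow_mul] at hK
  have : CharP K p := charP_of_card_eq_prime_pow hK
  exact ⟨iterateFrobenius K p m, iterateFrobenius_def p m⟩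

theorem card_nthRootsFinset_of_card_eq_sq (hK : Fintype.card K = q ^ 2) :
    (nthRootsFinset (q + 1) (1 : K)).card = q + 1 := by
  obtain ⟨g, hg⟩ := IsCyclic.exists_ofOrder_eq_natCard (α := Kˣ)
  have hcard : Nat.card Kˣ = (q - 1) * (q + 1) := by
    rw [Nat.card_units, Nat.card_eq_fintype_card, hK, mul_comm, ← Nat.sq_sub_sq, one_pow]
  have hroot := (IsPrimitiveRoot.orderOf g).pow (hg ▸ Nat.card_pos) (hg.trans hcard)
  exact (IsPrimitiveRoot.coe_units_iff.2 hroot).card_nthRootsFinset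

theorem involutive_of_eq_pow_of_card_eq_sq (hK : Fintype.card K = q ^ 2)
    (hφ : ∀ x, φ x = x ^ q) : Function.Involutive φ := fun x => by
  rw [hφ, hφ, ← pow_mul, ← sq, ← hK, FiniteField.pow_card]

theorem exists_map_ne_of_card_eq_sq (hK : Fintype.card K = q ^ 2) (hφ : ∀ x, φ x = x ^ q) :
    ∃ ω, φ ω ≠ ω := by
  have hq := one_lt_of_card_eq_sq hK
  have hlt : q - 1 < Nat.card Kˣ := by
    rw [Nat.card_units, Nat.card_eq_fintype_card, hK]
    exact Nat.sub_lt_sub_right hq.le (lt_self_pow₀ hq one_lt_two)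
  obtain ⟨u, hu⟩ := exists_pow_ne_one_of_isCyclic (Nat.sub_ne_zero_of_lt hq) hlt
  refine ⟨u, fun h => hu (Units.ext (mul_right_cancel₀ u.ne_zero ?_))⟩
  rw [Units.val_pow_eq_pow_val, pow_sub_one_mul (by omega), ← hφ, h, Units.val_one, one_mul]

theorem ncard_twistedReciprocal (hK : Fintype.card K = q ^ 2) (hφ : ∀ x, φ x = x ^ q) {ε : K}
    (hε : φ ε * ε = 1) (n : ℕ) : (twistedReciprocal φ ε (n + 1)).ncard = q ^ n := by
  obtain ⟨ω, hω⟩ := exists_map_ne_of_card_eq_sq hK hφ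
  have h := ncard_twistedReciprocal_sq (involutive_of_eq_pow_of_card_eq_sq hK hφ) hω hε n
  rw [Nat.card_eq_fintype_card, hK, pow_right_comm] at h
  exact Nat.pow_left_injective two_ne_zero h

theorem finite_twistedReciprocal (hK : Fintype.card K = q ^ 2) (hφ : ∀ x, φ x = x ^ q) {ε : K}
    (hε : φ ε * ε = 1) (n : ℕ) : (twistedReciprocal φ ε (n + 1)).Finite := by
  refine Set.finite_of_ncard_pos ?_
  rw [ncard_twistedReciprocal hK hφ hε]
  exact Nat.pow_pos (one_lt_of_card_eq_sq hK).le

theorem card_le_of_subset_selfConjReciprocal (hK : Fintype.card K = q ^ 2)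
    (hφ : ∀ x, φ x = x ^ q) {G : Finset K[X]} (hG : ∀ P ∈ G, P ∈ selfConjReciprocal φ)
    (hn : ∀ P ∈ G, P.natDegree = n + 1) : G.card ≤ q ^ n * (q + 1) := by
  classical
  have hφ' := involutive_of_eq_pow_of_card_eq_sq hK hφ
  have hmem {P : K[X]} (hP : P ∈ G) : P ∈ twistedReciprocal φ (φ (P.coeff 0)) (n + 1) :=
    hn P hP ▸ mem_twistedReciprocal_of_mem_selfConjReciprocal (hG P hP)
  rw [← card_nthRootsFinset_of_card_eq_sq hK]
  refine Finset.card_le_mul_card_image_of_maps_to (f := fun P => P.coeff 0) (fun P hP => ?_) _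
    fun a ha => ?_
  · rw [mem_nthRootsFinset_iff_map_mul_self hφ]
    exact mul_coeff_zero_of_mem_twistedReciprocal (hmem hP)
  · rw [mem_nthRootsFinset_iff_map_mul_self hφ] at ha
    have hε : φ (φ a) * φ a = 1 := by rw [hφ', mul_comm, ha]
    rw [← ncard_twistedReciprocal hK hφ hε, ← Set.ncard_coe_finset]
    refine Set.ncard_le_ncard (fun P hP => ?_) (finite_twistedReciprocal hK hφ hε n)
    obtain ⟨hPG, rfl⟩ := Finset.mem_filter.1 hP
    exact hmem hPG

theorem two_mul_card_le_of_subset_selfConjReciprocal (hK : Fintype.card K = q ^ 2)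
    (hφ : ∀ x, φ x = x ^ q) {G : Finset K[X]} (hG : ∀ P ∈ G, P ∈ selfConjReciprocal φ)
    (hn : ∀ P ∈ G, P.natDegree = n) : 2 * G.card ≤ 3 * q ^ n := by
  rcases n with _ | n
  · have hG1 : G ⊆ {1} := fun P hP =>
      Finset.mem_singleton.2 ((hG P hP).1.natDegree_eq_zero.1 (hn P hP))
    have hcard := Finset.card_le_card hG1
    rw [Finset.card_singleton] at hcard
    rw [pow_zero]
    omega
  · have hcard := card_le_of_subset_selfConjReciprocal hK hφ hG hn
    have hq := one_lt_of_card_eq_sq hK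
    calc 2 * G.card ≤ 2 * (q ^ n * (q + 1)) := Nat.mul_le_mul_left 2 hcard
      _ = q ^ n * (2 * q + 2) := by ring
      _ ≤ q ^ n * (3 * q) := by gcongr; omega
      _ = 3 * q ^ (n + 1) := by ring

end FiniteField

section EulerProduct

theorem hasSum_pi_prod_of_nonneg {ι κ : Type*} [Fintype ι] {f : ι → κ → ℝ} {a : ι → ℝ}
    (h0 : ∀ i j, 0 ≤ f i j) (hf : ∀ i, HasSum (f i) (a i)) :
    HasSum (fun m : ι → κ => ∏ i, f i (m i)) (∏ i, a i) := by
  classical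
  have hcofinal : Filter.Tendsto (fun s : Finset κ => Fintype.piFinset fun _ : ι => s)
      Filter.atTop Filter.atTop :=
    Filter.tendsto_atTop_finset_of_monotone
      (fun s t hst => Fintype.piFinset_subset _ _ fun _ => hst)
      fun m => ⟨Finset.univ.image m, Fintype.mem_piFinset.2 fun i =>
        Finset.mem_image_of_mem m (Finset.mem_univ i)⟩
  have hmono := Finset.sum_mono_set_of_nonneg fun m : ι → κ =>
    Finset.prod_nonneg fun i (_ : i ∈ Finset.univ) => h0 i (m i)
  refine (tendsto_iff_tendsto_subseq_of_monotone hmono hcofinal).2 ?_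
  simp only [Function.comp_def, ← Finset.prod_univ_sum]
  exact tendsto_finsetProd _ fun i _ => hf i

theorem hasSum_pi_prod_pow {ι : Type*} [Fintype ι] {x : ι → ℝ} (h0 : ∀ i, 0 ≤ x i)
    (h1 : ∀ i, x i < 1) :
    HasSum (fun m : ι → ℕ => ∏ i, x i ^ m i) (∏ i, (1 - x i)⁻¹) :=
  hasSum_pi_prod_of_nonneg (fun i j => pow_nonneg (h0 i) j) fun i =>
    hasSum_geometric_of_lt_one (h0 i) (h1 i)

theorem mul_lt_one_of_le_two_sub {t x : ℝ} (ht : 1 < t) (hx : x ≤ 2 - t) : t * x < 1 := by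
  nlinarith

theorem inv_one_sub_mul_le_sq {t x : ℝ} (ht : 1 < t) (h0 : 0 ≤ x) (hx : x ≤ 2 - t) :
    (1 - t * x)⁻¹ ≤ ((1 - x)⁻¹) ^ 2 := by
  rw [inv_pow]
  refine inv_anti₀ (pow_pos (by linarith) 2) ?_
  nlinarith

variable {K : Type*} [Field K] {φ : K →+* K} {ι : Type*} [Fintype ι] {B : ι → K[X]} {u Z : ℝ}

theorem prod_pow_natDegree_pow (hB : ∀ i, (B i).Monic) (m : ι → ℕ) :
    ∏ i, (u ^ (B i).natDegree) ^ m i = u ^ (∏ i, B i ^ m i).natDegree := by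
  rw [natDegree_prod_of_monic _ _ fun i _ => (hB i).pow _, ← Finset.prod_pow_eq_pow_sum]
  refine Finset.prod_congr rfl fun i _ => ?_
  rw [(hB i).natDegree_pow, ← pow_mul, mul_comm]

theorem prod_inv_one_sub_pow_natDegree_le (hφ : Function.Involutive φ)
    (hB : ∀ i, IsConjBlock φ (B i)) (hinj : Function.Injective B) (hu0 : 0 ≤ u) (hu1 : u < 1)
    (hZ : ∀ G : Finset K[X], (∀ P ∈ G, P ∈ selfConjReciprocal φ) →
      ∑ P ∈ G, u ^ P.natDegree ≤ Z) :
    ∏ i, (1 - u ^ (B i).natDegree)⁻¹ ≤ Z := by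
  classical
  refine hasSum_le_of_sum_le (hasSum_pi_prod_pow (fun i => pow_nonneg hu0 _)
    fun i => pow_lt_one₀ hu0 hu1 ((hB i).natDegree_ne_zero hφ)) fun s => ?_
  have hprod : Function.Injective fun m : ι → ℕ => ∏ i, B i ^ m i :=
    prod_pow_injective_of_pairwise_isCoprime (fun i => ((hB i).monic hφ).ne_zero)
      (fun i => (hB i).not_isUnit) fun i j hij => (hB i).isCoprime hφ (hB j) (hinj.ne hij)
  simp only [prod_pow_natDegree_pow fun i => (hB i).monic hφ]
  rw [← Finset.sum_image (f := fun P : K[X] => u ^ P.natDegree) hprod.injOn]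
  refine hZ _ fun P hP => ?_
  obtain ⟨m, -, rfl⟩ := Finset.mem_image.1 hP
  exact prod_mem fun i _ => pow_mem ((hB i).mem_selfConjReciprocal hφ) _

theorem exists_finset_isConjBlock_prod_pow_eq (hφ : Function.Involutive φ) {G : Finset K[X]}
    (hG : ∀ P ∈ G, P ∈ selfConjReciprocal φ) :
    ∃ T : Finset K[X], (∀ B ∈ T, IsConjBlock φ B) ∧ ∀ P ∈ G, ∃ m : T → ℕ,
      ∏ B : T, (B : K[X]) ^ m B = P ∧ (factors P).card ≤ 2 * ∑ B : T, m B := by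
  classical
  choose! s hs hsP using fun P (hP : P ∈ G) => exists_multiset_isConjBlock_prod_eq hφ (hG P hP)
  refine ⟨G.biUnion fun P => (s P).toFinset, fun B hB => ?_, fun P hP => ?_⟩
  · obtain ⟨P, hP, hBP⟩ := Finset.mem_biUnion.1 hB
    exact hs P hP B (Multiset.mem_toFinset.1 hBP)
  · have hsub : (s P).toFinset ⊆ G.biUnion fun P => (s P).toFinset :=
      Finset.subset_biUnion_of_mem (fun P => (s P).toFinset) hP
    refine ⟨fun B => (s P).count (B : K[X]), ?_, ?_⟩
    · rw [Finset.prod_coe_sort _ fun B : K[X] => B ^ (s P).count B,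
        ← Finset.prod_multiset_count_of_subset _ _ hsub, hsP P hP]
    · rw [Finset.sum_coe_sort _ fun B : K[X] => (s P).count B,
        Multiset.sum_count_eq_card fun B hB => hsub (Multiset.mem_toFinset.2 hB)]
      have hne : (s P).prod ≠ 0 := by
        rw [hsP P hP]
        exact (hG P hP).1.ne_zero
      have hcard := card_factors_multiset_prod_le hne fun B hB =>
        (hs P hP B hB).card_factors_le_two hφ
      rwa [hsP P hP] at hcard

theorem pow_natDegree_le_two_sub (hφ : Function.Involutive φ) {B : K[X]} (hB : IsConjBlock φ B)
    {t : ℝ} (ht : 1 < t) (hu0 : 0 ≤ u) (hut : u ≤ 2 - t) : u ^ B.natDegree ≤ 2 - t :=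
  (pow_le_of_le_one hu0 (by linarith) (hB.natDegree_ne_zero hφ)).trans hut

theorem prod_inv_one_sub_mul_pow_natDegree_le (hφ : Function.Involutive φ)
    (hB : ∀ i, IsConjBlock φ (B i)) (hinj : Function.Injective B) {t : ℝ} (ht : 1 < t)
    (hu0 : 0 ≤ u) (hut : u ≤ 2 - t)
    (hZ : ∀ G : Finset K[X], (∀ P ∈ G, P ∈ selfConjReciprocal φ) →
      ∑ P ∈ G, u ^ P.natDegree ≤ Z) :
    ∏ i, (1 - t * u ^ (B i).natDegree)⁻¹ ≤ Z ^ 2 := by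
  have hx0 (i : ι) : 0 ≤ u ^ (B i).natDegree := pow_nonneg hu0 _
  have hxt (i : ι) : u ^ (B i).natDegree ≤ 2 - t := pow_natDegree_le_two_sub hφ (hB i) ht hu0 hut
  calc ∏ i, (1 - t * u ^ (B i).natDegree)⁻¹
      ≤ ∏ i, ((1 - u ^ (B i).natDegree)⁻¹) ^ 2 := Finset.prod_le_prod
        (fun i _ => inv_nonneg.2 (sub_nonneg.2 (mul_lt_one_of_le_two_sub ht (hxt i)).le))
        fun i _ => inv_one_sub_mul_le_sq ht (hx0 i) (hxt i)
    _ = (∏ i, (1 - u ^ (B i).natDegree)⁻¹) ^ 2 := Finset.prod_pow _ _ _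
    _ ≤ Z ^ 2 := pow_le_pow_left₀
        (Finset.prod_nonneg fun i _ => inv_nonneg.2 (by linarith [hxt i]))
        (prod_inv_one_sub_pow_natDegree_le hφ hB hinj hu0 (by linarith) hZ) 2

theorem sum_rpow_card_factors_mul_pow_natDegree_le (hφ : Function.Involutive φ) {t : ℝ}
    (ht : 1 < t) (hu0 : 0 ≤ u) (hut : u ≤ 2 - t)
    (hZ : ∀ G : Finset K[X], (∀ P ∈ G, P ∈ selfConjReciprocal φ) →
      ∑ P ∈ G, u ^ P.natDegree ≤ Z)
    {G : Finset K[X]} (hG : ∀ P ∈ G, P ∈ selfConjReciprocal φ) :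
    ∑ P ∈ G, t ^ ((factors P).card / 2 : ℝ) * u ^ P.natDegree ≤ Z ^ 2 := by
  classical
  have ht0 : 0 ≤ t := by linarith
  obtain ⟨T, hT, hm⟩ := exists_finset_isConjBlock_prod_pow_eq hφ hG
  choose! m hmP hmc using hm
  have hTm (B : T) : (B : K[X]).Monic := (hT B B.2).monic hφ
  set x : T → ℝ := fun B => u ^ (B : K[X]).natDegree
  have hx0 (B : T) : 0 ≤ x B := pow_nonneg hu0 _
  have hsum := hasSum_pi_prod_pow (fun B => mul_nonneg ht0 (hx0 B)) fun B =>
    mul_lt_one_of_le_two_sub ht (pow_natDegree_le_two_sub hφ (hT B B.2) ht hu0 hut)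
  have hterm (P : K[X]) (hP : P ∈ G) : t ^ ((factors P).card / 2 : ℝ) * u ^ P.natDegree ≤
      ∏ B, (t * x B) ^ m P B := by
    have hexp : ((factors P).card / 2 : ℝ) ≤ (∑ B, m P B : ℕ) := by
      rw [div_le_iff₀' two_pos]
      exact_mod_cast hmc P hP
    simp only [mul_pow]
    rw [Finset.prod_mul_distrib, prod_pow_natDegree_pow hTm, hmP P hP, Finset.prod_pow_eq_pow_sum,
      ← Real.rpow_natCast t]
    exact mul_le_mul_of_nonneg_right (Real.rpow_le_rpow_of_exponent_le ht.le hexp)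
      (pow_nonneg hu0 _)
  have hinj : Set.InjOn m (G : Set K[X]) := fun P hP Q hQ h => by
    rw [← hmP P hP, ← hmP Q hQ, h]
  calc ∑ P ∈ G, t ^ ((factors P).card / 2 : ℝ) * u ^ P.natDegree
      ≤ ∑ P ∈ G, ∏ B : T, (t * x B) ^ m P B := Finset.sum_le_sum hterm
    _ = ∑ m' ∈ G.image m, ∏ B : T, (t * x B) ^ m' B := by
        rw [Finset.sum_image hinj]
    _ ≤ ∏ B : T, (1 - t * x B)⁻¹ := sum_le_hasSum _
        (fun m' _ => Finset.prod_nonneg fun B _ => pow_nonneg (mul_nonneg ht0 (hx0 B)) _) hsum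
    _ ≤ Z ^ 2 := prod_inv_one_sub_mul_pow_natDegree_le hφ (fun B : T => hT B B.2)
        Subtype.val_injective ht hu0 hut hZ

end EulerProduct

theorem one_half_le_one_sub_inv_pow {n : ℕ} (hn : n ≠ 0) :
    (1 / 2 : ℝ) ≤ (1 - (2 * n : ℝ)⁻¹) ^ n := by
  have hn1 : (1 : ℝ) ≤ n := Nat.one_le_cast.2 (Nat.one_le_iff_ne_zero.2 hn)
  have hinv : (2 * n : ℝ)⁻¹ ≤ 1 := inv_le_one_of_one_le₀ (by linarith)
  calc (1 / 2 : ℝ) = 1 + n * -(2 * n : ℝ)⁻¹ := by field_simp; ring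
    _ ≤ (1 + -(2 * n : ℝ)⁻¹) ^ n := one_add_mul_le_pow (by linarith) n
    _ = (1 - (2 * n : ℝ)⁻¹) ^ n := by rw [← sub_eq_add_neg]

section Count

variable {K : Type*} [Field K] [Fintype K] {φ : K →+* K} {ε : K} {n q : ℕ} {x : ℝ}

theorem sum_div_pow_natDegree_le_of_subset_selfConjReciprocal (hK : Fintype.card K = q ^ 2)
    (hφ : ∀ x, φ x = x ^ q) {r : ℝ} (hr0 : 0 ≤ r) (hr1 : r < 1) {G : Finset K[X]}
    (hG : ∀ P ∈ G, P ∈ selfConjReciprocal φ) :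
    ∑ P ∈ G, (r / q) ^ P.natDegree ≤ 3 / 2 * (1 - r)⁻¹ := by
  have hq : (0 : ℝ) < q := Nat.cast_pos.2 (one_lt_of_card_eq_sq hK).le
  have hdegree (d : ℕ) : ∑ P ∈ G with P.natDegree = d, (r / q) ^ P.natDegree ≤ 3 / 2 * r ^ d := by
    have hcard : 2 * ((G.filter (·.natDegree = d)).card : ℝ) ≤ 3 * q ^ d := by
      exact_mod_cast two_mul_card_le_of_subset_selfConjReciprocal hK hφ
        (fun P hP => hG P (Finset.mem_filter.1 hP).1) fun P hP => (Finset.mem_filter.1 hP).2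
    calc ∑ P ∈ G with P.natDegree = d, (r / q) ^ P.natDegree
        = (G.filter (·.natDegree = d)).card * (r / q) ^ d := by
          rw [Finset.sum_congr rfl fun P hP => by rw [(Finset.mem_filter.1 hP).2],
            Finset.sum_const, nsmul_eq_mul]
      _ ≤ 3 / 2 * q ^ d * (r / q) ^ d := by gcongr; linarith
      _ = 3 / 2 * r ^ d := by rw [mul_assoc, ← mul_pow, mul_div_cancel₀ r hq.ne']
  rw [← Finset.sum_fiberwise_of_maps_to
    fun P hP => Finset.mem_image_of_mem natDegree hP]
  exact (Finset.sum_le_sum fun d _ => hdegree d).trans <|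
    sum_le_hasSum _ (fun d _ => by positivity) ((hasSum_geometric_of_lt_one hr0 hr1).mul_left _)

theorem card_mul_rpow_le_of_subset_selfConjReciprocal (hK : Fintype.card K = q ^ 2)
    (hφ : ∀ x, φ x = x ^ q) (hn : n ≠ 0) {G : Finset K[X]}
    (hG : ∀ P ∈ G, P ∈ selfConjReciprocal φ) (hdeg : ∀ P ∈ G, P.natDegree = n)
    (hx : ∀ P ∈ G, x ≤ (factors P).card) :
    G.card * (3 / 2 : ℝ) ^ (x / 2) ≤ 18 * n ^ 2 * q ^ n := by
  have hq : (2 : ℝ) ≤ q := Nat.ofNat_le_cast.2 (one_lt_of_card_eq_sq hK)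
  have hn1 : (1 : ℝ) ≤ n := Nat.one_le_cast.2 (Nat.one_le_iff_ne_zero.2 hn)
  -- Staying at distance of order `1 / n` from the pole `r = 1` costs only powers of `n`.
  set r : ℝ := 1 - (2 * n : ℝ)⁻¹ with hr
  have hr0 : 0 ≤ r := sub_nonneg.2 (inv_le_one_of_one_le₀ (by linarith))
  have hr1 : r < 1 := sub_lt_self _ (by positivity)
  have hZ (G' : Finset K[X]) (hG' : ∀ P ∈ G', P ∈ selfConjReciprocal φ) :
      ∑ P ∈ G', (r / q) ^ P.natDegree ≤ 3 * n := by
    refine (sum_div_pow_natDegree_le_of_subset_selfConjReciprocal hK hφ hr0 hr1 hG').trans_eq ?_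
    rw [hr, sub_sub_cancel, inv_inv]
    ring
  have hrankin := sum_rpow_card_factors_mul_pow_natDegree_le (t := 3 / 2)
    (involutive_of_eq_pow_of_card_eq_sq hK hφ) (by norm_num) (by positivity)
    (by rw [div_le_iff₀ (by positivity)]; linarith) hZ hG
  have hterm : ∀ P ∈ G, (3 / 2 : ℝ) ^ (x / 2) * (1 / 2 / q ^ n) ≤
      (3 / 2 : ℝ) ^ ((factors P).card / 2 : ℝ) * (r / q) ^ P.natDegree := fun P hP => by
    rw [hdeg P hP, div_pow]
    gcongr
    · norm_num
    · exact hx P hP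
    · exact one_half_le_one_sub_inv_pow hn
  have hsum := (Finset.card_nsmul_le_sum G _ _ hterm).trans hrankin
  rw [nsmul_eq_mul, div_div, mul_one_div, mul_div_assoc', div_le_iff₀ (by positivity)] at hsum
  linarith

theorem card_mul_rpow_le_of_subset_twistedReciprocal (hK : Fintype.card K = q ^ 2)
    (hφ : ∀ x, φ x = x ^ q) (hε : φ ε * ε = 1) (hn : n ≠ 0) {A : Finset K[X]}
    (hA : ∀ P ∈ A, P ∈ twistedReciprocal φ ε n) (hx : ∀ P ∈ A, x ≤ (factors P).card) :
    A.card * (3 / 2 : ℝ) ^ (x / 2) ≤ 18 * n ^ 3 * q ^ (n - 1) := by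
  classical
  set E := nthRootsFinset (q + 1) (1 : K)
  have hE {μ : K} (hμ : μ ∈ E) : φ μ * μ = 1 := (mem_nthRootsFinset_iff_map_mul_self hφ).1 hμ
  set G := Finset.image₂ scaleRoots A E
  have hG : ∀ Q ∈ G, Q ∈ selfConjReciprocal φ ∧ Q.natDegree = n ∧ x ≤ (factors Q).card := by
    refine Finset.forall_mem_image₂.2 fun P hP μ hμ => ?_
    have hQ := scaleRoots_mem_twistedReciprocal (hE hμ) (hA P hP)
    refine ⟨mem_selfConjReciprocal_of_mem_twistedReciprocal hQ, hQ.2.1, (hx P hP).trans ?_⟩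
    exact_mod_cast card_factors_le_card_factors_scaleRoots (hA P hP).1.ne_zero μ
  have hbound := card_mul_rpow_le_of_subset_selfConjReciprocal hK hφ hn (fun Q hQ => (hG Q hQ).1)
    (fun Q hQ => (hG Q hQ).2.1) fun Q hQ => (hG Q hQ).2.2
  have hspread : (A.card : ℝ) * (q + 1) ≤ n * G.card := by
    rw [← Nat.cast_add_one, ← card_nthRootsFinset_of_card_eq_sq hK]
    exact_mod_cast card_mul_card_le_mul_card_image₂_scaleRoots (Nat.pos_of_ne_zero hn)
      (left_ne_zero_of_mul_eq_one hε) (fun h => by simpa using hE h) fun P hP =>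
        ⟨(hA P hP).2.1, mul_left_cancel₀ (right_ne_zero_of_mul_eq_one hε)
          ((mul_coeff_zero_of_mem_twistedReciprocal (hA P hP)).trans (mul_comm ε _ ▸ hε.symm))⟩
  have hq : (0 : ℝ) < q := Nat.cast_pos.2 (one_lt_of_card_eq_sq hK).le
  refine le_of_mul_le_mul_left ?_ hq
  calc q * (A.card * (3 / 2 : ℝ) ^ (x / 2))
      ≤ A.card * (q + 1) * (3 / 2 : ℝ) ^ (x / 2) := by
        rw [mul_left_comm, ← mul_assoc]
        gcongr
        exact le_add_of_nonneg_right zero_le_one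
    _ ≤ n * G.card * (3 / 2 : ℝ) ^ (x / 2) := by gcongr
    _ = n * (G.card * (3 / 2 : ℝ) ^ (x / 2)) := mul_assoc _ _ _
    _ ≤ n * (18 * n ^ 2 * q ^ n) := by gcongr
    _ = q * (18 * n ^ 3 * q ^ (n - 1)) := by rw [← mul_pow_sub_one hn (q : ℝ)]; ring

theorem ncard_mul_rpow_le_ncard_twistedReciprocal (hK : Fintype.card K = q ^ 2)
    (hφ : ∀ x, φ x = x ^ q) (hε : φ ε * ε = 1) (hn : n ≠ 0) (x : ℝ) :
    {P ∈ twistedReciprocal φ ε n | x < (factors P).card}.ncard * (3 / 2 : ℝ) ^ (x / 2) ≤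
      18 * n ^ 3 * (twistedReciprocal φ ε n).ncard := by
  obtain ⟨m, rfl⟩ := Nat.exists_eq_succ_of_ne_zero hn
  have hfin : {P ∈ twistedReciprocal φ ε (m + 1) | x < (factors P).card}.Finite :=
    (finite_twistedReciprocal hK hφ hε m).subset (Set.sep_subset _ _)
  rw [Set.ncard_eq_toFinset_card _ hfin, ncard_twistedReciprocal hK hφ hε, Nat.cast_pow]
  exact card_mul_rpow_le_of_subset_twistedReciprocal hK hφ hε hn
    (fun P hP => (hfin.mem_toFinset.1 hP).1) fun P hP => (hfin.mem_toFinset.1 hP).2.le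

theorem ncard_le_rpow_neg_mul_ncard_twistedReciprocal (hK : Fintype.card K = q ^ 2)
    (hφ : ∀ x, φ x = x ^ q) (ε : K) (hn : 2 ≤ n) (k : ℝ) :
    {P ∈ twistedReciprocal φ ε n |
      2 * (k + 8) / Real.log (3 / 2) * Real.log n < (factors P).card}.ncard ≤
      (n : ℝ) ^ (-k) * (twistedReciprocal φ ε n).ncard := by
  rcases (twistedReciprocal φ ε n).eq_empty_or_nonempty with hempty | ⟨P, hP⟩
  · simp [hempty]
  have hε := map_mul_self_of_mem_twistedReciprocal (involutive_of_eq_pow_of_card_eq_sq hK hφ) hP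
  have hn2 : (2 : ℝ) ≤ n := Nat.ofNat_le_cast.2 hn
  have hn0 : (0 : ℝ) < n := by linarith
  have hrpow : (3 / 2 : ℝ) ^ (2 * (k + 8) / Real.log (3 / 2) * Real.log n / 2) = n ^ k * n ^ 8 := by
    rw [← Real.rpow_add_natCast hn0.ne', Real.rpow_def_of_pos (by norm_num),
      Real.rpow_def_of_pos hn0]
    congr 1
    field_simp
    ring
  have hbound := ncard_mul_rpow_le_ncard_twistedReciprocal hK hφ hε (n := n) (by omega)
    (2 * (k + 8) / Real.log (3 / 2) * Real.log n)
  rw [hrpow, ← mul_assoc] at hbound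
  have h18 : (18 : ℝ) ≤ n ^ 5 := le_trans (by norm_num) (pow_le_pow_left₀ two_pos.le hn2 5)
  rw [Real.rpow_neg hn0.le, inv_mul_eq_div, le_div_iff₀ (Real.rpow_pos_of_pos hn0 k)]
  refine le_of_mul_le_mul_right (hbound.trans ?_) (pow_pos hn0 8)
  calc 18 * (n : ℝ) ^ 3 * ((twistedReciprocal φ ε n).ncard : ℝ)
      ≤ n ^ 5 * n ^ 3 * ((twistedReciprocal φ ε n).ncard : ℝ) := by gcongr
    _ = ((twistedReciprocal φ ε n).ncard : ℝ) * n ^ 8 := by ring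

end Count

theorem few_factors_SU_general (k : ℝ) :
    ∃ N : ℝ, ∀ n : ℕ, 2 ≤ n → ∀ (q : ℕ) (K : Type*) [Field K] [Fintype K],
      Fintype.card K = q ^ 2 → ∀ ε : K,
      (Set.ncard {P : K[X] | P.Monic ∧ P.natDegree = n ∧
          (∀ i ≤ n, P.coeff i ^ q = ε * P.coeff (n - i)) ∧
          N * Real.log n < ((factors P).card : ℝ)} : ℝ) ≤
        (n : ℝ) ^ (-k) *
          (Set.ncard {P : K[X] | P.Monic ∧ P.natDegree = n ∧
            ∀ i ≤ n, P.coeff i ^ q = ε * P.coeff (n - i)} : ℝ) := by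
  refine ⟨2 * (k + 8) / Real.log (3 / 2), fun n hn q K _ _ hK ε => ?_⟩
  obtain ⟨φ, hφ⟩ := exists_ringHom_eq_pow_of_card_eq_sq hK
  have hcount := ncard_le_rpow_neg_mul_ncard_twistedReciprocal hK hφ ε hn k
  simpa only [twistedReciprocal, hφ, Set.mem_ofPred_eq, and_assoc] using hcount

/-- For every `k > 0` there exists `N` such that for every `n ≥ 2` and every prime power
`q`, among the monic polynomials `P ∈ F_{q²}[x]` of degree `n` with
`P̄(x) = (-x)^n P(1/x)` (i.e. `(coeff P i)^q = (-1)^n * coeff P (n-i)` for `0 ≤ i ≤ n`),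
the number of those having more than `N log n` monic irreducible factors (with
multiplicity) over `F_{q²}[x]` is at most `n^{-k}` times the total number. -/
theorem few_factors_SU (k : ℝ) (hk : 0 < k) :
    ∃ N : ℝ, ∀ n : ℕ, 2 ≤ n → ∀ q : ℕ, IsPrimePow q →
      ∀ (K : Type) [Field K] [Fintype K], Fintype.card K = q ^ 2 →
      (Set.ncard {P : Polynomial K | P.Monic ∧ P.natDegree = n ∧
          (∀ i ≤ n, (P.coeff i) ^ q = (-1) ^ n * P.coeff (n - i)) ∧
          N * Real.log n <
            ((UniqueFactorizationMonoid.factors P).card : ℝ)} : ℝ) ≤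
        (n : ℝ) ^ (-k) *
          (Set.ncard {P : Polynomial K | P.Monic ∧ P.natDegree = n ∧
            ∀ i ≤ n, (P.coeff i) ^ q = (-1) ^ n * P.coeff (n - i)} : ℝ) :=
  (few_factors_SU_general k).imp fun _ hN n hn q _ K _ _ hK => hN n hn q K hK ((-1) ^ n)
end

section
/- For a prime power q, let O_{2n}(q) denote the set of monic polynomials P(x) ∈ F_q[x] of degree 2n such that P(x) = x^{2n} P(1/x), i.e., the coefficient of x^i equals the coefficient of x^{2n−i} for every 0 ≤ i ≤ 2n. For every k > 0 there exists N such that for every integer n ≥ 2 and every prime power q, the number of P ∈ O_{2n}(q) that split into more than N·log n monic irreducible factors in F_q[x] (counted with multiplicity) is at most n^{−k} · |O_{2n}(q)|. -/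
/-!
Every self-reciprocal `P` of degree at most `2 * n` is `x ^ n * Q (x + 1 / x)` for a unique `Q` of
degree at most `n`, and `P` is monic of degree `2 * n` exactly when `Q` is monic of degree `n`. The
substitution at most doubles the number `Ω` of irreducible factors: if `R` is irreducible and `a` is
a root of an irreducible factor `S` of its image, then `F(a)` contains the root `a + 1 / a` of `R`,
so `deg R ≤ deg S`, and there is room for at most two such `S` in degree `2 * deg R`.

Since `c ^ Ω P ≤ (c ^ 2) ^ Ω Q` for `1 ≤ c`, it remains to bound the mean of `c ^ Ω Q` over monic
`Q` of degree `n` when `c ^ 2 ≤ 2`. Write `Q = A * B ^ 2` with `A` squarefree. Then `c ^ Ω A` is at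
most the number `2 ^ Ω A` of monic divisors of `A`, which is `deg A + 1` on average over all monic
polynomials, and `c ^ (2 * Ω B) ≤ q ^ deg B`, whereas `B ^ 2` accounts for `2 * deg B` of the
degree. So the mean is at most `(n + 1) ^ 2`, and Markov's inequality for `c ^ Ω` concludes.
-/

namespace SelfReciprocal

open Polynomial UniqueFactorizationMonoid Finset

section Palindromes

variable {R : Type*} [Semiring R]

variable (R) in
/-- The polynomials `P` of degree at most `n` with `P = x ^ n * P (1 / x)`. -/
def palindromes (n : ℕ) : Submodule R R[X] where
  carrier := {P | P.natDegree ≤ n ∧ reflect n P = P}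
  add_mem' hP hQ := ⟨natDegree_add_le_of_degree_le hP.1 hQ.1, by rw [reflect_add, hP.2, hQ.2]⟩
  zero_mem' := by simp
  smul_mem' c P hP :=
    ⟨(natDegree_smul_le c P).trans hP.1, by rw [smul_eq_C_mul, reflect_C_mul, hP.2]⟩

theorem mem_palindromes_iff_reflect {n : ℕ} {P : R[X]} :
    P ∈ palindromes R n ↔ P.natDegree ≤ n ∧ reflect n P = P :=
  Iff.rfl

theorem reflect_eq_self_iff {n : ℕ} {P : R[X]} :
    reflect n P = P ↔ ∀ i ≤ n, P.coeff i = P.coeff (n - i) := by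
  refine ⟨fun h i hi ↦ ?_, fun h ↦ ?_⟩
  · rw [← revAt_le hi, ← coeff_reflect, h]
  · ext i
    rw [coeff_reflect]
    rcases le_or_gt i n with hi | hi
    · rw [revAt_le hi, h i hi]
    · rw [revAt_eq_self_of_lt hi]

theorem mem_palindromes_iff_coeff {n : ℕ} {P : R[X]} :
    P ∈ palindromes R n ↔ P.natDegree ≤ n ∧ ∀ i ≤ n, P.coeff i = P.coeff (n - i) := by
  rw [mem_palindromes_iff_reflect, reflect_eq_self_iff]

theorem mul_mem_palindromes {m n : ℕ} {P Q : R[X]} (hP : P ∈ palindromes R m)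
    (hQ : Q ∈ palindromes R n) : P * Q ∈ palindromes R (m + n) :=
  ⟨natDegree_mul_le_of_le hP.1 hQ.1, by rw [reflect_mul _ _ hP.1 hQ.1, hP.2, hQ.2]⟩

theorem pow_mem_palindromes {m : ℕ} {P : R[X]} (hP : P ∈ palindromes R m) (i : ℕ) :
    P ^ i ∈ palindromes R (m * i) := by
  induction i with
  | zero => simp [mem_palindromes_iff_reflect]
  | succ i ih => exact pow_succ P i ▸ mul_mem_palindromes ih hP

theorem X_mem_palindromes : (X : R[X]) ∈ palindromes R 2 :=
  ⟨natDegree_X_le.trans one_le_two, by simpa [revAt_le] using reflect_monomial (R := R) 2 1⟩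

theorem X_sq_add_one_mem_palindromes : (X ^ 2 + 1 : R[X]) ∈ palindromes R 2 :=
  ⟨by compute_degree, by
    rw [reflect_add, reflect_monomial, reflect_one, revAt_le le_rfl, Nat.sub_self, pow_zero,
      add_comm]⟩

theorem exists_X_mul_eq_of_mem_palindromes {n : ℕ} {P : R[X]} (hP : P ∈ palindromes R (n + 2))
    (h0 : P.coeff 0 = 0) : ∃ Q ∈ palindromes R n, X * Q = P := by
  rw [mem_palindromes_iff_coeff] at hP
  refine ⟨P.divX, mem_palindromes_iff_coeff.2 ⟨?_, fun i hi ↦ ?_⟩, ?_⟩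
  · refine natDegree_le_iff_coeff_eq_zero.2 fun i hi ↦ ?_
    rw [coeff_divX]
    rcases (Nat.succ_le_of_lt hi).eq_or_lt with rfl | hi
    · rw [hP.2 _ le_rfl, Nat.sub_self, h0]
    · exact coeff_eq_zero_of_natDegree_lt (by omega)
  · rw [coeff_divX, coeff_divX, hP.2 _ (by omega)]
    congr 1
    omega
  · simpa [h0] using X_mul_divX_add P

end Palindromes

section ReciprocalLift

section CommSemiring

variable {R : Type*} [CommSemiring R]

/-- The linear map `Q ↦ x ^ n * Q (x + 1 / x)` on polynomials of degree at most `n`, encoded as the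
homogenization of `Q` in degree `n` evaluated at `(x ^ 2 + 1, x)`. Coefficients of `Q` in degrees
above `n` are ignored. -/
noncomputable def reciprocalLift (n : ℕ) : R[X] →ₗ[R] R[X] :=
  (MvPolynomial.aeval ![X ^ 2 + 1, X]).toLinearMap ∘ₗ homogenizeLM n

theorem reciprocalLift_apply (n : ℕ) (Q : R[X]) :
    reciprocalLift n Q = MvPolynomial.aeval ![X ^ 2 + 1, X] (Q.homogenize n) :=
  rfl

theorem reciprocalLift_eq_sum (n : ℕ) (Q : R[X]) :
    reciprocalLift n Q =
      ∑ ij ∈ antidiagonal n, Q.coeff ij.1 • ((X ^ 2 + 1) ^ ij.1 * X ^ ij.2) := by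
  simp [reciprocalLift_apply, homogenize, MvPolynomial.aeval_monomial, Finsupp.update_eq_add_single,
    Finsupp.prod_add_index', pow_add, Algebra.smul_def]

theorem reciprocalLift_mul {m n : ℕ} {P Q : R[X]} (hP : P.natDegree ≤ m) (hQ : Q.natDegree ≤ n) :
    reciprocalLift (m + n) (P * Q) = reciprocalLift m P * reciprocalLift n Q := by
  simp only [reciprocalLift_apply, homogenize_mul P Q hP hQ, map_mul]

theorem reciprocalLift_succ {n : ℕ} {Q : R[X]} (hQ : Q.natDegree ≤ n) :
    reciprocalLift (n + 1) Q = X * reciprocalLift n Q := by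
  have h := reciprocalLift_mul (m := 1) (P := 1) (by simp) hQ
  rwa [one_mul, add_comm 1, reciprocalLift_apply 1, homogenize_one, pow_one,
    MvPolynomial.aeval_X] at h

theorem reciprocalLift_zero_C (a : R) : reciprocalLift 0 (C a) = C a := by
  simp [reciprocalLift_apply]

theorem reciprocalLift_mem_palindromes (n : ℕ) (Q : R[X]) :
    reciprocalLift n Q ∈ palindromes R (2 * n) := by
  rw [reciprocalLift_eq_sum]
  refine Submodule.sum_mem _ fun ij hij ↦ Submodule.smul_mem _ _ ?_
  rw [← mem_antidiagonal.1 hij, mul_add]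
  exact mul_mem_palindromes (pow_mem_palindromes X_sq_add_one_mem_palindromes _)
    (pow_mem_palindromes X_mem_palindromes _)

theorem coeff_zero_reciprocalLift (n : ℕ) (Q : R[X]) :
    (reciprocalLift n Q).coeff 0 = Q.coeff n := by
  rw [reciprocalLift_eq_sum, finsetSum_coeff, sum_eq_single (n, 0)]
  · simp [coeff_zero_eq_eval_zero]
  · rintro ⟨i, j⟩ hij hne
    have hj : j ≠ 0 := by
      rintro rfl
      exact hne (by simpa using hij)
    simp [hj.symm]
  · simp

theorem coeff_reciprocalLift (n : ℕ) (Q : R[X]) :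
    (reciprocalLift n Q).coeff (2 * n) = Q.coeff n := by
  have h := (mem_palindromes_iff_coeff.1 (reciprocalLift_mem_palindromes n Q)).2 _ le_rfl
  rw [h, Nat.sub_self, coeff_zero_reciprocalLift]

theorem natDegree_reciprocalLift {Q : R[X]} (hQ : Q ≠ 0) :
    (reciprocalLift Q.natDegree Q).natDegree = 2 * Q.natDegree :=
  natDegree_eq_of_le_of_coeff_ne_zero (reciprocalLift_mem_palindromes _ _).1
    (by rwa [coeff_reciprocalLift, coeff_natDegree, leadingCoeff_ne_zero])

theorem aeval_reciprocalLift {K : Type*} [Semifield K] [Algebra R K] {n : ℕ} {Q : R[X]}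
    (hQ : Q.natDegree ≤ n) {a : K} (ha : a ≠ 0) :
    aeval a (reciprocalLift n Q) = a ^ n * aeval (a + a⁻¹) Q := by
  rw [reciprocalLift_eq_sum, map_sum, aeval_eq_sum_range' (Nat.lt_succ_of_le hQ),
    Finset.Nat.sum_antidiagonal_eq_sum_range_succ_mk, mul_sum]
  refine sum_congr rfl fun i hi ↦ ?_
  obtain ⟨j, rfl⟩ := Nat.exists_eq_add_of_le (mem_range_succ_iff.1 hi)
  have h : a ^ 2 + 1 = a * (a + a⁻¹) := by field_simp
  simp only [map_smul, map_mul, map_pow, map_add, aeval_X, map_one, h, mul_smul_comm,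
    Nat.add_sub_cancel_left, mul_pow]
  congr 1
  ring

theorem eq_zero_of_reciprocalLift_eq_zero {n : ℕ} {Q : R[X]} (hQ : Q.natDegree ≤ n)
    (h : reciprocalLift n Q = 0) : Q = 0 := by
  have hcoeff : Q.coeff n = 0 := by rw [← coeff_zero_reciprocalLift, h, coeff_zero]
  induction n with
  | zero => rw [eq_C_of_natDegree_le_zero hQ, hcoeff, C_0]
  | succ n ih =>
    have hQ' : Q.natDegree ≤ n := natDegree_le_pred hQ hcoeff
    have h' : reciprocalLift n Q = 0 :=
      isRegular_X.left (by simpa [reciprocalLift_succ hQ'] using h)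
    exact ih hQ' h' (by rw [← coeff_zero_reciprocalLift, h', coeff_zero])

end CommSemiring

variable {R : Type*} [CommRing R]

theorem reciprocalLift_injOn (n : ℕ) :
    Set.InjOn (reciprocalLift n) {Q : R[X] | Q.natDegree ≤ n} := fun P hP Q hQ h ↦ by
  refine sub_eq_zero.1 (eq_zero_of_reciprocalLift_eq_zero (n := n) ?_ ?_)
  · exact (natDegree_sub_le_of_le hP hQ).trans (max_self n).le
  · rw [map_sub, h, sub_self]

theorem exists_reciprocalLift_eq {n : ℕ} {P : R[X]} (hP : P ∈ palindromes R (2 * n)) :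
    ∃ Q : R[X], Q.natDegree ≤ n ∧ reciprocalLift n Q = P := by
  induction n generalizing P with
  | zero =>
    rw [eq_C_of_natDegree_le_zero hP.1]
    exact ⟨_, natDegree_C _ |>.le, reciprocalLift_zero_C _⟩
  | succ n ih =>
    set L : R[X] := P.coeff 0 • X ^ (n + 1) with hL
    have hLdeg : L.natDegree ≤ n + 1 := (natDegree_smul_le _ _).trans (natDegree_X_pow_le _)
    have hsub : P - reciprocalLift (n + 1) L ∈ palindromes R (2 * n + 2) :=
      Submodule.sub_mem _ hP (reciprocalLift_mem_palindromes (n + 1) L)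
    obtain ⟨S, hS, hSP⟩ := exists_X_mul_eq_of_mem_palindromes hsub
      (by simp [hL, coeff_zero_reciprocalLift])
    obtain ⟨Q, hQ, rfl⟩ := ih hS
    refine ⟨Q + L, natDegree_add_le_of_degree_le (by omega) hLdeg, ?_⟩
    rw [map_add, reciprocalLift_succ hQ, hSP, sub_add_cancel]

end ReciprocalLift

section Monics

section Ring

variable {R : Type*} [Ring R] [Nontrivial R] [Finite R]

variable (R) in
theorem finite_monic_natDegree (n : ℕ) : {P : R[X] | P.Monic ∧ P.natDegree = n}.Finite :=
  Finite.of_equiv _ ((monicEquivDegreeLT n).trans (degreeLTEquiv R n).toEquiv).symm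

variable (R) in
/-- The finite set of monic polynomials of degree `n`. -/
noncomputable def monics (n : ℕ) : Finset R[X] := (finite_monic_natDegree R n).toFinset

@[simp]
theorem mem_monics {n : ℕ} {P : R[X]} : P ∈ monics R n ↔ P.Monic ∧ P.natDegree = n := by
  simp [monics]

theorem mem_monics_iff_coeff_eq_one {n : ℕ} {P : R[X]} (hP : P.natDegree ≤ n) :
    P ∈ monics R n ↔ P.coeff n = 1 := by
  rw [mem_monics]
  refine ⟨fun ⟨hmonic, hdeg⟩ ↦ hdeg ▸ hmonic, fun h ↦ ?_⟩
  exact ⟨monic_of_natDegree_le_of_coeff_eq_one n hP h,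
    natDegree_eq_of_le_of_coeff_ne_zero hP (h ▸ one_ne_zero)⟩

theorem card_monics (n : ℕ) : #(monics R n) = Nat.card R ^ n := by
  rw [monics, ← Set.ncard_eq_toFinset_card _ (finite_monic_natDegree R n), ← Nat.card_coe_set_eq]
  calc Nat.card {P : R[X] | P.Monic ∧ P.natDegree = n}
      = Nat.card (Fin n → R) :=
        Nat.card_congr ((monicEquivDegreeLT n).trans (degreeLTEquiv R n).toEquiv)
    _ = Nat.card R ^ n := by rw [Nat.card_fun, Nat.card_fin]

open scoped Classical in
theorem card_filter_dvd_monics_le {D : R[X]} (hD : D.Monic) (n : ℕ) :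
    #{Q ∈ monics R n | D ∣ Q} ≤ Nat.card R ^ (n - D.natDegree) := by
  rw [← card_monics]
  refine card_le_card_of_surjOn (D * ·) fun Q hQ ↦ ?_
  obtain ⟨hQ, E, rfl⟩ := mem_filter.1 hQ
  obtain ⟨hmonic, hdeg⟩ := mem_monics.1 hQ
  have hE := hD.of_mul_monic_left hmonic
  rw [hD.natDegree_mul hE] at hdeg
  exact ⟨E, mem_monics.2 ⟨hE, by omega⟩, rfl⟩

open scoped Classical in
theorem sum_sum_card_filter_dvd_le (n : ℕ) :
    ∑ Q ∈ monics R n, ∑ d ∈ range (n + 1), #{D ∈ monics R d | D ∣ Q} ≤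
      (n + 1) * Nat.card R ^ n := by
  calc ∑ Q ∈ monics R n, ∑ d ∈ range (n + 1), #{D ∈ monics R d | D ∣ Q}
      = ∑ d ∈ range (n + 1), ∑ D ∈ monics R d, #{Q ∈ monics R n | D ∣ Q} := by
        rw [sum_comm]
        exact sum_congr rfl fun d _ ↦
          (sum_card_bipartiteAbove_eq_sum_card_bipartiteBelow (· ∣ ·)).symm
    _ ≤ ∑ d ∈ range (n + 1), ∑ _D ∈ monics R d, Nat.card R ^ (n - d) := by
        refine sum_le_sum fun d _ ↦ sum_le_sum fun D hD ↦ ?_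
        obtain ⟨hmonic, rfl⟩ := mem_monics.1 hD
        exact card_filter_dvd_monics_le hmonic n
    _ = ∑ _d ∈ range (n + 1), Nat.card R ^ n := by
        refine sum_congr rfl fun d hd ↦ ?_
        rw [sum_const, card_monics, smul_eq_mul, pow_mul_pow_sub _ (mem_range_succ_iff.1 hd)]
    _ = (n + 1) * Nat.card R ^ n := by simp

variable (R) in
open scoped Classical in
/-- The finite set of monic palindromes of degree `n`. -/
noncomputable def monicPalindromes (n : ℕ) : Finset R[X] := {P ∈ monics R n | reflect n P = P}

@[simp]
theorem mem_monicPalindromes {n : ℕ} {P : R[X]} :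
    P ∈ monicPalindromes R n ↔
      P.Monic ∧ P.natDegree = n ∧ ∀ i ≤ n, P.coeff i = P.coeff (n - i) := by
  classical
  rw [monicPalindromes, mem_filter, mem_monics, reflect_eq_self_iff, and_assoc]

end Ring

variable {R : Type*} [CommRing R] [Nontrivial R] [Finite R]

variable (R) in
theorem bijOn_reciprocalLift (n : ℕ) :
    Set.BijOn (reciprocalLift n) (monics R n : Set R[X]) (monicPalindromes R (2 * n)) := by
  classical
  have hmonic {Q : R[X]} (hQ : Q.natDegree ≤ n) :
      reciprocalLift n Q ∈ monics R (2 * n) ↔ Q ∈ monics R n := by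
    rw [mem_monics_iff_coeff_eq_one (reciprocalLift_mem_palindromes n Q).1, coeff_reciprocalLift,
      mem_monics_iff_coeff_eq_one hQ]
  refine ⟨fun Q hQ ↦ ?_, (reciprocalLift_injOn n).mono fun Q hQ ↦ (mem_monics.1 hQ).2.le,
    fun P hP ↦ ?_⟩
  · exact mem_filter.2
      ⟨(hmonic (mem_monics.1 hQ).2.le).2 hQ, (reciprocalLift_mem_palindromes n Q).2⟩
  · obtain ⟨hPm, hP⟩ := mem_filter.1 hP
    obtain ⟨Q, hQ, rfl⟩ := exists_reciprocalLift_eq ⟨(mem_monics.1 hPm).2.le, hP⟩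
    exact ⟨Q, (hmonic hQ).1 hPm, rfl⟩

theorem card_monicPalindromes (n : ℕ) : #(monicPalindromes R (2 * n)) = Nat.card R ^ n := by
  rw [← card_monics]
  obtain ⟨hmaps, hinj, hsurj⟩ := bijOn_reciprocalLift R n
  exact (card_nbij _ hmaps hinj hsurj).symm

end Monics

section Factors

variable {α : Type*} [CommMonoidWithZero α] [UniqueFactorizationMonoid α]

theorem card_factors_mul {a b : α} (ha : a ≠ 0) (hb : b ≠ 0) :
    (factors (a * b)).card = (factors a).card + (factors b).card := by
  rw [Multiset.card_eq_card_of_rel (factors_mul ha hb), Multiset.card_add]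

theorem exists_squarefree_mul_sq {a : α} (ha : a ≠ 0) :
    ∃ b c : α, Squarefree b ∧ b * c ^ 2 = a := by
  induction a using induction_on_prime with
  | h₁ => exact absurd rfl ha
  | h₂ a hu => exact ⟨a, 1, hu.squarefree, by simp⟩
  | h₃ a p ha' hp ih =>
    obtain ⟨b, c, hb, rfl⟩ := ih ha'
    by_cases hpb : p ∣ b
    · obtain ⟨b, rfl⟩ := hpb
      exact ⟨b, p * c, hb.of_mul_right, by rw [mul_pow, sq p]; ac_rfl⟩
    · refine ⟨p * b, c, squarefree_mul_iff.2 ⟨?_, hp.irreducible.squarefree, hb⟩, mul_assoc _ _ _⟩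
      exact hp.irreducible.isRelPrime_iff_not_dvd.2 hpb

theorem two_pow_card_factors_le_card_of_squarefree [Nontrivial α] [NormalizationMonoid α] {a : α}
    (ha : Squarefree a) {s : Finset α} (hs : ∀ d, d ∣ a → normalize d = d → d ∈ s) :
    2 ^ (factors a).card ≤ #s := by
  classical
  have hnodup := (squarefree_iff_nodup_normalizedFactors ha.ne_zero).1 ha
  have hcard : #(normalizedFactors a).powerset.toFinset = 2 ^ (factors a).card := by
    rw [Multiset.toFinset_card_of_nodup (Multiset.nodup_powerset.2 hnodup), Multiset.card_powerset,
      normalizedFactors, Multiset.card_map]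
  have hfac {m : Multiset α} (hm : m ≤ normalizedFactors a) :
      normalizedFactors (normalize m.prod) = m := by
    rw [(normalize_associated _).normalizedFactors_eq, normalizedFactors_prod_eq m fun p hp ↦
      irreducible_of_normalized_factor p (Multiset.mem_of_le hm hp)]
    exact (Multiset.map_congr rfl fun p hp ↦
      normalize_normalized_factor p (Multiset.mem_of_le hm hp)).trans (Multiset.map_id m)
  rw [← hcard]
  refine card_le_card_of_injOn (fun m ↦ normalize m.prod) (fun m hm ↦ ?_) fun m hm l hl h ↦ ?_
  · have hm : m ≤ normalizedFactors a := by simpa using hm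
    refine hs _ (normalize_dvd_iff.2 ?_) (normalize_idem _)
    exact (Multiset.prod_dvd_prod_of_le hm).trans (prod_normalizedFactors ha.ne_zero).dvd
  · calc m = normalizedFactors (normalize m.prod) := (hfac (by simpa using hm)).symm
      _ = normalizedFactors (normalize l.prod) := congrArg normalizedFactors h
      _ = l := hfac (by simpa using hl)

end Factors

section PolynomialFactors

theorem mul_card_factors_le_natDegree {R : Type*} [CommRing R] [IsDomain R]
    [UniqueFactorizationMonoid R[X]] {P : R[X]} (hP : P ≠ 0) {d : ℕ}
    (hd : ∀ S, Irreducible S → S ∣ P → d ≤ S.natDegree) :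
    d * (factors P).card ≤ P.natDegree := by
  have h0 : (0 : R[X]) ∉ factors P := fun h ↦ (irreducible_of_factor _ h).ne_zero rfl
  rw [← natDegree_eq_of_degree_eq (degree_eq_degree_of_associated (factors_prod hP)),
    natDegree_multiset_prod _ h0, mul_comm, ← smul_eq_mul, ← Multiset.card_map natDegree]
  refine Multiset.card_nsmul_le_sum fun x hx ↦ ?_
  obtain ⟨S, hS, rfl⟩ := Multiset.mem_map.1 hx
  exact hd S (irreducible_of_factor _ hS) (dvd_of_mem_factors hS)

variable {F : Type*} [Field F]

theorem exists_monic_squarefree_mul_sq {Q : F[X]} (hQ : Q.Monic) :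
    ∃ A B : F[X], A.Monic ∧ B.Monic ∧ Squarefree A ∧ A * B ^ 2 = Q := by
  classical
  obtain ⟨A, B, hA, rfl⟩ := exists_squarefree_mul_sq hQ.ne_zero
  have hB0 : B ≠ 0 := by
    rintro rfl
    simp at hQ
  refine ⟨normalize A, normalize B, monic_normalize hA.ne_zero, monic_normalize hB0,
    (normalize_associated A).squarefree_iff.2 hA, ?_⟩
  rw [sq, ← normalize_mul, ← normalize_mul, ← sq, hQ.normalize_eq_self]

theorem card_factors_le_natDegree {P : F[X]} (hP : P ≠ 0) : (factors P).card ≤ P.natDegree := by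
  simpa using mul_card_factors_le_natDegree hP (d := 1) fun S hS _ ↦ hS.natDegree_pos

/-- If `a` is a root of `S` then `a + 1 / a` is a root of `R`, and it lies in the field `F(a)` of
degree `deg S`. -/
theorem natDegree_le_of_dvd_reciprocalLift {R S : F[X]} (hR : Irreducible R) (hS : Irreducible S)
    (h : S ∣ reciprocalLift R.natDegree R) : R.natDegree ≤ S.natDegree := by
  have : Fact (Irreducible S) := ⟨hS⟩
  set a := AdjoinRoot.root S
  have hroot : aeval a (reciprocalLift R.natDegree R) = 0 := by
    rwa [AdjoinRoot.aeval_eq, AdjoinRoot.mk_eq_zero]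
  have ha : a ≠ 0 := by
    intro ha
    rw [ha, ← coeff_zero_eq_aeval_zero', coeff_zero_reciprocalLift] at hroot
    exact leadingCoeff_ne_zero.2 hR.ne_zero ((map_eq_zero _).1 hroot)
  rw [aeval_reciprocalLift le_rfl ha] at hroot
  have hroot' : aeval (a + a⁻¹) R = 0 := (mul_eq_zero.1 hroot).resolve_left (pow_ne_zero _ ha)
  let pb := AdjoinRoot.powerBasis hS.ne_zero
  have : Module.Finite F (AdjoinRoot S) := pb.finite
  calc R.natDegree = (minpoly F (a + a⁻¹)).natDegree := by
        rw [← minpoly.eq_of_irreducible hR hroot',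
          natDegree_mul_C (inv_ne_zero (leadingCoeff_ne_zero.2 hR.ne_zero))]
    _ ≤ Module.finrank F (AdjoinRoot S) := minpoly.natDegree_le _
    _ = S.natDegree := by rw [pb.finrank, AdjoinRoot.powerBasis_dim]

theorem card_factors_reciprocalLift_le_two {R : F[X]} (hR : Irreducible R) :
    (factors (reciprocalLift R.natDegree R)).card ≤ 2 := by
  have h0 : reciprocalLift R.natDegree R ≠ 0 := fun h ↦
    hR.ne_zero (eq_zero_of_reciprocalLift_eq_zero le_rfl h)
  have h := mul_card_factors_le_natDegree h0 fun S hS ↦ natDegree_le_of_dvd_reciprocalLift hR hS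
  rw [natDegree_reciprocalLift hR.ne_zero, mul_comm 2] at h
  exact Nat.le_of_mul_le_mul_left h hR.natDegree_pos

theorem card_factors_reciprocalLift_le {Q : F[X]} (hQ : Q ≠ 0) :
    (factors (reciprocalLift Q.natDegree Q)).card ≤ 2 * (factors Q).card := by
  have hne {P : F[X]} (hP : P ≠ 0) : reciprocalLift P.natDegree P ≠ 0 := fun h ↦
    hP (eq_zero_of_reciprocalLift_eq_zero le_rfl h)
  induction Q using induction_on_prime with
  | h₁ => exact absurd rfl hQ
  | h₂ Q hu =>
    obtain ⟨a, -, rfl⟩ := isUnit_iff.1 hu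
    rw [natDegree_C, reciprocalLift_zero_C, factors_of_isUnit hu]
    simp
  | h₃ Q R hQ0 hR ih =>
    rw [natDegree_mul hR.ne_zero hQ0, reciprocalLift_mul le_rfl le_rfl,
      card_factors_mul (hne hR.ne_zero) (hne hQ0), card_factors_mul hR.ne_zero hQ0,
      card_factors_of_irreducible hR.irreducible, mul_add]
    exact add_le_add (card_factors_reciprocalLift_le_two hR.irreducible) (ih hQ0)

end PolynomialFactors

section Moments

variable {F : Type*} [Field F] [Finite F]

open scoped Classical in
theorem two_pow_card_factors_le_sum_card_filter_dvd {A : F[X]} (hA : Squarefree A) :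
    2 ^ (factors A).card ≤ ∑ d ∈ range (A.natDegree + 1), #{D ∈ monics F d | D ∣ A} := by
  refine (two_pow_card_factors_le_card_of_squarefree hA fun D hD hnorm ↦ ?_).trans
    card_biUnion_le
  have hmonic := (normalize_eq_self_iff_monic (ne_zero_of_dvd_ne_zero hA.ne_zero hD)).1 hnorm
  exact mem_biUnion.2 ⟨D.natDegree,
    mem_range_succ_iff.2 (natDegree_le_of_dvd hD hA.ne_zero),
    mem_filter.2 ⟨mem_monics.2 ⟨hmonic, rfl⟩, hD⟩⟩

open scoped Classical in
theorem sum_two_pow_card_factors_squarefree_le (n : ℕ) :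
    ∑ A ∈ monics F n with Squarefree A, 2 ^ (factors A).card ≤ (n + 1) * Nat.card F ^ n := by
  refine le_trans ?_ (sum_sum_card_filter_dvd_le n)
  refine (sum_le_sum fun A hA ↦ ?_).trans (sum_le_sum_of_subset (filter_subset _ _))
  obtain ⟨hA, hsq⟩ := mem_filter.1 hA
  obtain ⟨-, rfl⟩ := mem_monics.1 hA
  exact two_pow_card_factors_le_sum_card_filter_dvd hsq

variable (F) in
open scoped Classical in
/-- The pairs `(A, B)` of monic polynomials with `A` squarefree, `deg A = a` and `deg B = b`. -/
noncomputable def squarefreeSquarePairs (a b : ℕ) : Finset (F[X] × F[X]) :=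
  {A ∈ monics F a | Squarefree A} ×ˢ monics F b

open scoped Classical in
theorem monics_subset_image_squarefreeSquarePairs (n : ℕ) :
    monics F n ⊆ ((range (n / 2 + 1)).sigma fun b ↦ squarefreeSquarePairs F (n - 2 * b) b).image
      fun x ↦ x.2.1 * x.2.2 ^ 2 := by
  intro Q hQ
  obtain ⟨hmonic, rfl⟩ := mem_monics.1 hQ
  obtain ⟨A, B, hA, hB, hsq, rfl⟩ := exists_monic_squarefree_mul_sq hmonic
  rw [hA.natDegree_mul (hB.pow 2), hB.natDegree_pow]
  refine mem_image.2 ⟨⟨B.natDegree, A, B⟩, mem_sigma.2 ⟨?_, mem_product.2 ⟨?_, ?_⟩⟩, rfl⟩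
  · exact mem_range_succ_iff.2 ((Nat.le_div_iff_mul_le two_pos).2 (by dsimp only; omega))
  · simpa using ⟨hA, hsq⟩
  · simpa using hB

theorem pow_card_factors_mul_sq_le {c : ℝ} (hc0 : 0 ≤ c) (hc : c ^ 2 ≤ 2) {A B : F[X]} (hA : A ≠ 0)
    (hB : B ≠ 0) :
    c ^ (factors (A * B ^ 2)).card ≤ 2 ^ (factors A).card * (Nat.card F : ℝ) ^ B.natDegree := by
  have hq : (2 : ℝ) ≤ Nat.card F := by exact_mod_cast Finite.one_lt_card (α := F)
  have hc2 : c ≤ 2 := by nlinarith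
  calc c ^ (factors (A * B ^ 2)).card
      = c ^ (factors A).card * (c ^ 2) ^ (factors B).card := by
        rw [card_factors_mul hA (pow_ne_zero 2 hB), sq B, card_factors_mul hB hB, ← two_mul,
          pow_add, pow_mul]
    _ ≤ 2 ^ (factors A).card * (Nat.card F : ℝ) ^ (factors B).card := by
        gcongr
        exact hc.trans hq
    _ ≤ 2 ^ (factors A).card * (Nat.card F : ℝ) ^ B.natDegree := by
        gcongr
        · exact one_le_two.trans hq
        · exact card_factors_le_natDegree hB

theorem sum_squarefreeSquarePairs_le {c : ℝ} (hc0 : 0 ≤ c) (hc : c ^ 2 ≤ 2) (a b : ℕ) :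
    ∑ x ∈ squarefreeSquarePairs F a b, c ^ (factors (x.1 * x.2 ^ 2)).card ≤
      (a + 1) * (Nat.card F : ℝ) ^ (a + 2 * b) := by
  classical
  calc ∑ x ∈ squarefreeSquarePairs F a b, c ^ (factors (x.1 * x.2 ^ 2)).card
      ≤ ∑ x ∈ squarefreeSquarePairs F a b, 2 ^ (factors x.1).card * (Nat.card F : ℝ) ^ b := by
        refine sum_le_sum fun x hx ↦ ?_
        obtain ⟨hA, hB⟩ := mem_product.1 hx
        obtain ⟨hmonic, rfl⟩ := mem_monics.1 hB
        exact pow_card_factors_mul_sq_le hc0 hc (mem_filter.1 hA).2.ne_zero hmonic.ne_zero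
    _ = (∑ A ∈ monics F a with Squarefree A, 2 ^ (factors A).card : ℕ) *
          (Nat.card F : ℝ) ^ (2 * b) := by
        rw [squarefreeSquarePairs, sum_product, Nat.cast_sum, sum_mul]
        refine sum_congr rfl fun A _ ↦ ?_
        dsimp only
        rw [sum_const, card_monics, nsmul_eq_mul]
        push_cast
        ring
    _ ≤ ((a + 1) * Nat.card F ^ a : ℕ) * (Nat.card F : ℝ) ^ (2 * b) := by
        gcongr
        exact sum_two_pow_card_factors_squarefree_le a
    _ = (a + 1) * (Nat.card F : ℝ) ^ (a + 2 * b) := by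
        push_cast
        ring

theorem sum_pow_card_factors_monics_le {c : ℝ} (hc0 : 0 ≤ c) (hc : c ^ 2 ≤ 2) (n : ℕ) :
    ∑ Q ∈ monics F n, c ^ (factors Q).card ≤ (n + 1) ^ 2 * (Nat.card F : ℝ) ^ n := by
  classical
  calc ∑ Q ∈ monics F n, c ^ (factors Q).card
      ≤ ∑ b ∈ range (n / 2 + 1), ∑ x ∈ squarefreeSquarePairs F (n - 2 * b) b,
          c ^ (factors (x.1 * x.2 ^ 2)).card := by
        rw [sum_sigma']
        exact (sum_le_sum_of_subset_of_nonneg (monics_subset_image_squarefreeSquarePairs n)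
          fun _ _ _ ↦ by positivity).trans (sum_image_le_of_nonneg fun _ _ ↦ by positivity)
    _ ≤ ∑ _b ∈ range (n / 2 + 1), (n + 1) * (Nat.card F : ℝ) ^ n := by
        refine sum_le_sum fun b hb ↦ (sum_squarefreeSquarePairs_le hc0 hc _ b).trans ?_
        have hb : 2 * b ≤ n := by have := mem_range_succ_iff.1 hb; omega
        rw [Nat.sub_add_cancel hb]
        gcongr
        exact n.sub_le _
    _ = (n / 2 + 1 : ℕ) * ((n + 1) * (Nat.card F : ℝ) ^ n) := by
        rw [sum_const, card_range, nsmul_eq_mul]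
    _ ≤ (n + 1 : ℕ) * ((n + 1) * (Nat.card F : ℝ) ^ n) := by
        gcongr
        exact n.div_le_self 2
    _ = (n + 1) ^ 2 * (Nat.card F : ℝ) ^ n := by
        push_cast
        ring

theorem sum_pow_card_factors_monicPalindromes_le {c : ℝ} (hc1 : 1 ≤ c) (hc : c ^ 4 ≤ 2) (n : ℕ) :
    ∑ P ∈ monicPalindromes F (2 * n), c ^ (factors P).card ≤
      (n + 1) ^ 2 * (#(monicPalindromes F (2 * n)) : ℝ) := by
  obtain ⟨hmaps, hinj, hsurj⟩ := bijOn_reciprocalLift F n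
  calc ∑ P ∈ monicPalindromes F (2 * n), c ^ (factors P).card
      = ∑ Q ∈ monics F n, c ^ (factors (reciprocalLift n Q)).card :=
        (sum_nbij _ hmaps hinj hsurj fun _ _ ↦ rfl).symm
    _ ≤ ∑ Q ∈ monics F n, (c ^ 2) ^ (factors Q).card := by
        refine sum_le_sum fun Q hQ ↦ ?_
        obtain ⟨hmonic, rfl⟩ := mem_monics.1 hQ
        rw [← pow_mul]
        exact pow_le_pow_right₀ hc1 (card_factors_reciprocalLift_le hmonic.ne_zero)
    _ ≤ (n + 1) ^ 2 * (Nat.card F : ℝ) ^ n :=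
        sum_pow_card_factors_monics_le (by positivity) (by rwa [← pow_mul]) n
    _ = (n + 1) ^ 2 * (#(monicPalindromes F (2 * n)) : ℝ) := by
        rw [card_monicPalindromes, Nat.cast_pow]

open scoped Classical in
theorem rpow_mul_card_filter_lt_card_factors_le {c : ℝ} (hc1 : 1 ≤ c) (hc : c ^ 4 ≤ 2) (n : ℕ)
    (s : ℝ) :
    c ^ s * #{P ∈ monicPalindromes F (2 * n) | s < (factors P).card} ≤
      (n + 1) ^ 2 * (#(monicPalindromes F (2 * n)) : ℝ) := by
  refine le_trans ?_ (sum_pow_card_factors_monicPalindromes_le hc1 hc n)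
  rw [mul_comm, ← nsmul_eq_mul]
  refine (card_nsmul_le_sum _ (fun P ↦ c ^ (factors P).card) _ fun P hP ↦ ?_).trans
    (sum_le_sum_of_subset_of_nonneg (filter_subset _ _) fun _ _ _ ↦ by positivity)
  rw [← Real.rpow_natCast]
  exact Real.rpow_le_rpow_of_exponent_le hc1 (mem_filter.1 hP).2.le

theorem rpow_div_log_mul_log {c x : ℝ} (hc : 1 < c) (hx : 0 < x) (t : ℝ) :
    c ^ (t / Real.log c * Real.log x) = x ^ t := by
  have hlog : Real.log c ≠ 0 := (Real.log_pos hc).ne'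
  rw [Real.rpow_def_of_pos (one_pos.trans hc), Real.rpow_def_of_pos hx]
  congr 1
  field_simp

open scoped Classical in
theorem card_filter_mul_log_lt_card_factors_le {c : ℝ} (hc1 : 1 < c) (hc : c ^ 4 ≤ 2) {n : ℕ}
    (hn : 2 ≤ n) (k : ℝ) :
    (#{P ∈ monicPalindromes F (2 * n) |
        (k + 4) / Real.log c * Real.log n < (factors P).card} : ℝ) ≤
      (n : ℝ) ^ (-k) * #(monicPalindromes F (2 * n)) := by
  have hn' : (2 : ℝ) ≤ n := by exact_mod_cast hn
  have hn0 : (0 : ℝ) < n := by positivity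
  have h := rpow_mul_card_filter_lt_card_factors_le (F := F) hc1.le hc n
    ((k + 4) / Real.log c * Real.log n)
  rw [rpow_div_log_mul_log hc1 hn0, Real.rpow_add hn0, mul_comm ((n : ℝ) ^ k), mul_assoc] at h
  have hsq : ((n : ℝ) + 1) ^ 2 ≤ (n : ℝ) ^ (4 : ℝ) := by
    calc ((n : ℝ) + 1) ^ 2 ≤ ((n : ℝ) ^ 2) ^ 2 := by
          gcongr
          nlinarith
      _ = (n : ℝ) ^ (4 : ℝ) := by
          rw [← pow_mul]
          norm_cast
  rw [Real.rpow_neg hn0.le, ← div_eq_inv_mul, le_div_iff₀' (by positivity)]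
  refine le_of_mul_le_mul_left (h.trans ?_) (by positivity)
  gcongr

end Moments

end SelfReciprocal

/-- For every `k > 0` there exists `N` such that for every `n ≥ 2` and every finite field
`F_q`, among the monic self-reciprocal polynomials `P ∈ F_q[x]` of degree `2n`
(i.e. `coeff P i = coeff P (2n - i)` for all `0 ≤ i ≤ 2n`), the number of those having
more than `N log n` monic irreducible factors (with multiplicity) is at most `n^{-k}`
times the total number. -/
theorem few_factors_SO (k : ℝ) (hk : 0 < k) :
    ∃ N : ℝ, ∀ n : ℕ, 2 ≤ n → ∀ q : ℕ, IsPrimePow q →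
      ∀ (F : Type) [Field F] [Fintype F], Fintype.card F = q →
      (Set.ncard {P : Polynomial F | P.Monic ∧ P.natDegree = 2 * n ∧
          (∀ i ≤ 2 * n, P.coeff i = P.coeff (2 * n - i)) ∧
          N * Real.log n <
            ((UniqueFactorizationMonoid.factors P).card : ℝ)} : ℝ) ≤
        (n : ℝ) ^ (-k) *
          (Set.ncard {P : Polynomial F | P.Monic ∧ P.natDegree = 2 * n ∧
            ∀ i ≤ 2 * n, P.coeff i = P.coeff (2 * n - i)} : ℝ) := by
  classical
  refine ⟨(k + 4) / Real.log (11 / 10), fun n hn q _ F _ _ _ ↦ ?_⟩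
  set N := (k + 4) / Real.log (11 / 10)
  have hall : {P : Polynomial F | P.Monic ∧ P.natDegree = 2 * n ∧
      ∀ i ≤ 2 * n, P.coeff i = P.coeff (2 * n - i)} =
        SelfReciprocal.monicPalindromes F (2 * n) := by
    ext P
    simp
  have hbad : {P : Polynomial F | P.Monic ∧ P.natDegree = 2 * n ∧
      (∀ i ≤ 2 * n, P.coeff i = P.coeff (2 * n - i)) ∧
      N * Real.log n < ((UniqueFactorizationMonoid.factors P).card : ℝ)} =
        ↑{P ∈ SelfReciprocal.monicPalindromes F (2 * n) |
          N * Real.log n < (UniqueFactorizationMonoid.factors P).card} := by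
    ext P
    simp [and_assoc]
  rw [hall, hbad, Set.ncard_coe_finset, Set.ncard_coe_finset]
  exact SelfReciprocal.card_filter_mul_log_lt_card_factors_le (by norm_num) (by norm_num) hn k
end
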